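/- Let A : ℝ³ → ℝ³⊗ℝ³ satisfy ‖∇A‖_2 < ∞ and let X ∈ 𝒞^{γ*} with γ* > 1/2. Then for every γ with 1/2 < γ ≤ γ* there exists a unique solution Y^γ ∈ C([0, t̂_γ(X)), 𝒞^γ) of the vortex filament equation Y(t)_ξ = X_ξ + ∫_0^t V^{Y(s)}(Y(s)_ξ) ds with initial condition X, where t̂_γ(X) is the first epoch of irregularity of the solution in the class 𝒞^γ. Moreover the first epoch of irregularity t̂_γ(X) does not depend on γ for 1/2 < γ ≤ γ*. -/

import Mathlib

/-!
The vortex filament equation is an ordinary differential equation in the Banach space `𝒞^γ` of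
closed Hölder curves (`HC γ`), driven by the field `u ↦ V^u ∘ u`.

*Young integral.* Young's maximal inequality `young_max` (by bisection) shows that
Riemann–Stieltjes sums of `γ`-Hölder functions with `γ > 1/2` converge. Along a closed curve a
constant integrand contributes nothing, so the integral is bounded by the Hölder constants alone
(`yInt_bound`).

*The field.* Three bounded derivatives of `A` control the first and second increments of
`(x, y) ↦ A (x - y)` along two curves, so the field is bounded and Lipschitz on each set
`{‖u‖_γ ≤ R}` (`field_bound`, `field_lip`); the sup norm of `u` does not enter. A Picard–Lindelöf
argument whose local existence time depends only on `R` yields a maximal solution, and its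
seminorm blows up if its lifetime is finite (`Controlled.exists_maximal`). Solutions of the
filament equation are the integral curves of the field (`isYoungSolution_of_sol`, `exists_sol`),
which gives existence and uniqueness in every `𝒞^γ`.

*Independence of `γ`.* The maximal solution in `𝒞^γ*`, with lifetime `t̂`, serves every `γ ≤ γ*`.
If `‖Y(t)‖_γ` did not tend to infinity at `t̂ < ∞`, local existence in `𝒞^γ` started shortly before
`t̂`, together with uniqueness, would keep `‖Y(t)‖_γ` bounded up to `t̂`. Then `V^{Y(t)}` is
Lipschitz uniformly in `t`, and Grönwall's inequality applied to `Y(t)_ξ - Y(t)_η` bounds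
`‖Y(t)‖_{γ*}` (`holder_propagation`), contradicting blow-up in `𝒞^γ*`.
-/

/- Common framework: Hölder curves on [0,1], Riemann–Stieltjes/Young/rough integrals as
limits of (compensated) partition sums, controlled paths, and covariations. -/

noncomputable section

open Set Filter Topology MeasureTheory
open scoped ENNReal

/-- Three dimensional Euclidean space. -/
abbrev E3 : Type := EuclideanSpace ℝ (Fin 3)

/-- `ℝ³ ⊗ ℝ³`, realized as (continuous) linear endomorphisms of `ℝ³`. -/
abbrev M3 : Type := E3 →L[ℝ] E3

/-- Outer (tensor) product `a ⊗ b` of two vectors, as the linear map `v ↦ ⟪b, v⟫ • a`. -/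
def oProd (a b : E3) : M3 := (innerSL ℝ b).smulRight a

/-- The canonical basis vectors of `ℝ³`. -/
def e3 (k : Fin 3) : E3 := EuclideanSpace.single k 1

/-- The `i`-th component of a vector of `ℝ³`. -/
def ecomp (i : Fin 3) (v : E3) : ℝ := @inner ℝ _ _ (e3 i) v

/-- The `(i,k)` entry of a matrix. -/
def mentry (i k : Fin 3) (M : M3) : ℝ := ecomp i (M (e3 k))

/-- `γ`-Hölder seminorm `‖X‖_γ` over the interval `[0,1]`. -/
def hSemi {F : Type*} [NormedAddCommGroup F] (γ : ℝ) (X : ℝ → F) : ℝ :=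
  sSup {r | ∃ s ∈ Icc (0:ℝ) 1, ∃ t ∈ Icc (0:ℝ) 1, s ≠ t ∧ r = ‖X s - X t‖ / |s - t| ^ γ}

/-- Supremum norm `‖X‖_∞` over the interval `[0,1]`. -/
def sNorm {F : Type*} [NormedAddCommGroup F] (X : ℝ → F) : ℝ :=
  sSup {r | ∃ s ∈ Icc (0:ℝ) 1, r = ‖X s‖}

/-- The norm `‖X‖_γ^* = ‖X‖_∞ + ‖X‖_γ`. -/
def hStar {F : Type*} [NormedAddCommGroup F] (γ : ℝ) (X : ℝ → F) : ℝ :=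
  sNorm X + hSemi γ X

/-- `X` is `γ`-Hölder continuous on `[0,1]`. -/
def HolderOn {F : Type*} [NormedAddCommGroup F] (γ : ℝ) (X : ℝ → F) : Prop :=
  ∃ C : ℝ, ∀ s ∈ Icc (0:ℝ) 1, ∀ t ∈ Icc (0:ℝ) 1, ‖X s - X t‖ ≤ C * |s - t| ^ γ

/-- A closed continuous curve parametrized by `[0,1]`. -/
def ClosedCurve {F : Type*} [NormedAddCommGroup F] (X : ℝ → F) : Prop :=
  ContinuousOn X (Icc (0:ℝ) 1) ∧ X 0 = X 1

/-- Membership in `𝒞^γ`: closed curve with finite `γ`-Hölder norm. -/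
def MemC {F : Type*} [NormedAddCommGroup F] (γ : ℝ) (X : ℝ → F) : Prop :=
  ClosedCurve X ∧ HolderOn γ X

/-- A partition `a = t 0 ≤ t 1 ≤ ⋯ ≤ t n = b` of the interval `[a,b]`. -/
structure Ptn (a b : ℝ) where
  n : ℕ
  t : ℕ → ℝ
  first : t 0 = a
  last : t n = b
  mono : ∀ i < n, t i ≤ t (i + 1)

/-- The mesh of the partition is at most `δ`. -/
def Ptn.MeshLE {a b : ℝ} (P : Ptn a b) (δ : ℝ) : Prop :=
  ∀ i < P.n, P.t (i + 1) - P.t i ≤ δ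

/-- `I` is the limit of the partition sums `S P` as the mesh of `P` tends to zero. -/
def RSLimit {F : Type*} [NormedAddCommGroup F] (a b : ℝ) (S : Ptn a b → F) (I : F) : Prop :=
  ∀ ε > 0, ∃ δ > 0, ∀ P : Ptn a b, P.MeshLE δ → ‖S P - I‖ ≤ ε

/-- `‖∇^j φ‖ = sup_x ‖∇^j φ(x)‖`. -/
def tnorm {F : Type*} [NormedAddCommGroup F] [NormedSpace ℝ F] (j : ℕ) (φ : E3 → F) : ℝ :=
  sSup (Set.range fun x => ‖iteratedFDeriv ℝ j φ x‖)

/-- `‖∇^m φ‖_n = Σ_{k=0}^n ‖∇^{m+k} φ‖`. -/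
def nablaNorm {F : Type*} [NormedAddCommGroup F] [NormedSpace ℝ F]
    (m n : ℕ) (φ : E3 → F) : ℝ :=
  ∑ k ∈ Finset.range (n + 1), tnorm (m + k) φ

/-- `‖∇^m φ‖_n < ∞` : `φ` is `(m+n)` times continuously differentiable with
`sup_x ‖∇^k φ(x)‖ < ∞` for every `m ≤ k ≤ m+n`. -/
def NablaBdd {F : Type*} [NormedAddCommGroup F] [NormedSpace ℝ F] (m n : ℕ) (φ : E3 → F) : Prop :=
  ContDiff ℝ (m + n) φ ∧
    ∀ k : ℕ, m ≤ k → k ≤ m + n → BddAbove (Set.range fun x => ‖iteratedFDeriv ℝ k φ x‖)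

/-- Riemann–Stieltjes sum for the line integral `∫_0^1 A(x - Z_η) dZ_η`. -/
def youngRS (A : E3 → M3) (Z : ℝ → E3) (x : E3) {a b : ℝ} (P : Ptn a b) : E3 :=
  ∑ i ∈ Finset.range P.n, A (x - Z (P.t i)) (Z (P.t (i + 1)) - Z (P.t i))

/-- `V = V^Z` is the Young velocity field `V^Z(x) = ∫_0^1 A(x - Z_η) dZ_η`, each value being
the limit of Riemann–Stieltjes sums. -/
def IsYoungVelocity (A : E3 → M3) (Z : ℝ → E3) (V : E3 → E3) : Prop :=
  ∀ x : E3, RSLimit 0 1 (fun P => youngRS A Z x P) (V x)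

/-- `C` is a constant realizing the Young estimate
`|∫_η^ξ (X_ρ - X_η) ⊗ dY_ρ| ≤ C ‖X‖_γ ‖Y‖_γ |ξ - η|^{2γ}`. -/
def YoungEstimate (γ C : ℝ) : Prop :=
  ∀ X Y : ℝ → E3, HolderOn γ X → HolderOn γ Y →
    ∀ η ∈ Icc (0:ℝ) 1, ∀ ξ ∈ Icc (0:ℝ) 1, η ≤ ξ →
      ∀ I : M3,
        RSLimit η ξ (fun P => ∑ i ∈ Finset.range P.n,
          oProd (X (P.t i) - X η) (Y (P.t (i + 1)) - Y (P.t i))) I →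
        ‖I‖ ≤ C * hSemi γ X * hSemi γ Y * (ξ - η) ^ (2 * γ)

/-- Continuity of `t ↦ Y(t)` from `[0,T]` into `𝒞^γ` (with the norm `‖·‖_γ^*`). -/
def ContXT (γ T : ℝ) (Y : ℝ → ℝ → E3) : Prop :=
  ∀ t ∈ Icc 0 T, ∀ ε > 0, ∃ δ > 0, ∀ s ∈ Icc 0 T, |s - t| ≤ δ →
    hStar γ (fun ξ => Y s ξ - Y t ξ) ≤ ε

/-- The norm `‖Y‖_{𝐗_T} = sup_{t ∈ [0,T]} ‖Y(t)‖_γ^*`. -/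
def xnorm (γ T : ℝ) (Y : ℝ → ℝ → E3) : ℝ :=
  sSup {r | ∃ t ∈ Icc 0 T, r = hStar γ (Y t)}

/-- Membership in `𝐗_T = C([0,T], 𝒞^γ)`. -/
def MemXT (γ T : ℝ) (Y : ℝ → ℝ → E3) : Prop :=
  (∀ t ∈ Icc 0 T, MemC γ (Y t)) ∧ ContXT γ T Y

/-- The map `F(Y)(t)_ξ = X_ξ + ∫_0^t v_s(Y(s)_ξ) ds`. -/
def Fmap (X : ℝ → E3) (v : ℝ → E3 → E3) (Y : ℝ → ℝ → E3) : ℝ → ℝ → E3 :=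
  fun t ξ => X ξ + ∫ s in (0:ℝ)..t, v s (Y s ξ)

/-- The controlled derivative of `F(Y)`:
`F(Y)'(t)_ξ = Id + ∫_0^t ∇v_s(Y(s)_ξ) ∘ Y'(s)_ξ ds`. -/
def Fmap' (v : ℝ → E3 → E3) (Y : ℝ → ℝ → E3) (Y' : ℝ → ℝ → M3) : ℝ → ℝ → M3 :=
  fun t ξ => ContinuousLinearMap.id ℝ E3
    + ∫ s in (0:ℝ)..t, (fderiv ℝ (v s) (Y s ξ)).comp (Y' s ξ)

/-- `Y` solves the vortex filament equation on `[0,T]` with initial condition `X`,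
the velocity fields being given by Young line integrals. -/
def IsYoungSolution (T : ℝ) (A : E3 → M3) (X : ℝ → E3) (Y : ℝ → ℝ → E3) : Prop :=
  ∃ v : ℝ → E3 → E3, (∀ s ∈ Icc 0 T, IsYoungVelocity A (Y s) (v s)) ∧
    ∀ t ∈ Icc 0 T, ∀ ξ ∈ Icc (0:ℝ) 1, Y t ξ = X ξ + ∫ s in (0:ℝ)..t, v s (Y s ξ)

/-- The same, on the half open interval `[0,T)`. -/
def IsYoungSolutionLt (T : ℝ) (A : E3 → M3) (X : ℝ → E3) (Y : ℝ → ℝ → E3) : Prop :=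
  ∃ v : ℝ → E3 → E3, (∀ s ∈ Ico 0 T, IsYoungVelocity A (Y s) (v s)) ∧
    ∀ t ∈ Ico 0 T, ∀ ξ ∈ Icc (0:ℝ) 1, Y t ξ = X ξ + ∫ s in (0:ℝ)..t, v s (Y s ξ)

/-- `β`-Hölder norm of a two-parameter function on `[0,1]²` (vanishing on the diagonal). -/
def rnorm {F : Type*} [NormedAddCommGroup F] (β : ℝ) (W : ℝ → ℝ → F) : ℝ :=
  sSup {r | ∃ s ∈ Icc (0:ℝ) 1, ∃ t ∈ Icc (0:ℝ) 1, s ≠ t ∧ r = ‖W s t‖ / |s - t| ^ β}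

/-- Finiteness of the `β`-Hölder norm of a two-parameter function. -/
def RBddOn {F : Type*} [NormedAddCommGroup F] (β : ℝ) (W : ℝ → ℝ → F) : Prop :=
  ∃ C : ℝ, ∀ s ∈ Icc (0:ℝ) 1, ∀ t ∈ Icc (0:ℝ) 1, ‖W s t‖ ≤ C * |s - t| ^ β

/-- `(X, 𝕏²)` is a `γ`-rough path: `X` is `γ`-Hölder, the area process `𝕏²` is continuous,
satisfies the compatibility (Chen) relation and has finite `2γ`-Hölder norm. -/
structure IsRoughPath (γ : ℝ) (X : ℝ → E3) (XX : ℝ → ℝ → M3) : Prop where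
  cont : ContinuousOn X (Icc (0:ℝ) 1)
  holder : HolderOn γ X
  cont2 : ContinuousOn (fun p : ℝ × ℝ => XX p.1 p.2) (Icc (0:ℝ) 1 ×ˢ Icc (0:ℝ) 1)
  chen : ∀ ξ ∈ Icc (0:ℝ) 1, ∀ η ∈ Icc (0:ℝ) 1, ∀ ρ ∈ Icc (0:ℝ) 1,
    XX ξ ρ - XX ξ η - XX η ρ = oProd (X ξ - X η) (X η - X ρ)
  bdd : RBddOn (2 * γ) XX

/-- Remainder `R^Y_{ηξ} = Y_ξ - Y_η - Y'_η (X_ξ - X_η)` of a controlled path. -/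
def ctrlRem (X Y : ℝ → E3) (Y' : ℝ → M3) (η ξ : ℝ) : E3 :=
  Y ξ - Y η - Y' η (X ξ - X η)

/-- `(Y, Y')` is a (closed) path weakly controlled by `X`, i.e. `Y ∈ 𝒟_X`. -/
structure IsControlled (γ : ℝ) (X Y : ℝ → E3) (Y' : ℝ → M3) : Prop where
  closed : Y 0 = Y 1
  cont : ContinuousOn Y (Icc (0:ℝ) 1)
  contD : ContinuousOn Y' (Icc (0:ℝ) 1)
  holderD : HolderOn γ Y'
  rem : RBddOn (2 * γ) (fun η ξ => ctrlRem X Y Y' η ξ)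

/-- The norm `‖Y‖_D = ‖Y'‖_γ + ‖R^Y‖_{2γ} + ‖Y'‖_∞` on `𝒟_X`. -/
def dnorm (γ : ℝ) (X Y : ℝ → E3) (Y' : ℝ → M3) : ℝ :=
  hSemi γ Y' + rnorm (2 * γ) (fun η ξ => ctrlRem X Y Y' η ξ) + sNorm Y'

/-- The norm `‖Y‖_D^* = ‖Y‖_D + ‖Y‖_∞`. -/
def dnormStar (γ : ℝ) (X Y : ℝ → E3) (Y' : ℝ → M3) : ℝ :=
  dnorm γ X Y Y' + sNorm Y

/-- The constant `C_X = 1 + ‖X‖_γ + ‖𝕏²‖_{2γ}`. -/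
def CXconst (γ : ℝ) (X : ℝ → E3) (XX : ℝ → ℝ → M3) : ℝ :=
  1 + hSemi γ X + rnorm (2 * γ) XX

/-- The compensator `P W Qᵀ` (matrix product), i.e. `(P W Qᵀ)^{ij} = P^{ik} W^{kl} Q^{jl}`. -/
def ctrlComp (P Q W : M3) : M3 := P ∘L W ∘L (ContinuousLinearMap.adjoint Q)

/-- Compensated Riemann sum
`Σ_i [ Y_{t_i} ⊗ (Z_{t_{i+1}} - Z_{t_i}) + Y'_{t_i} Z'_{t_i} 𝕏²_{t_{i+1} t_i} ]`
for the rough integral `∫ Y ⊗ dZ` of two weakly controlled paths. -/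
def roughPairRS (XX : ℝ → ℝ → M3) (Y Z : ℝ → E3) (Y' Z' : ℝ → M3)
    {a b : ℝ} (P : Ptn a b) : M3 :=
  ∑ i ∈ Finset.range P.n,
    (oProd (Y (P.t i)) (Z (P.t (i + 1)) - Z (P.t i))
      + ctrlComp (Y' (P.t i)) (Z' (P.t i)) (XX (P.t (i + 1)) (P.t i)))

/-- The contraction `Σ_{k,l} W^{kl} (W'(e_k))(Z'(e_l))`, the compensator of a matrix-valued
controlled integrand `W` (with controlled derivative `W'`) against `dZ`. -/
def comp2 (W' : E3 →L[ℝ] M3) (Z' : M3) (W : M3) : E3 :=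
  ∑ k : Fin 3, ∑ l : Fin 3, ecomp k (W (e3 l)) • (W' (e3 k)) (Z' (e3 l))

/-- Compensated Riemann sum for the rough line integral `∫_0^1 A(x - Z_η) dZ_η` along a path
`Z` weakly controlled by `X`, the integrand `η ↦ A(x - Z_η)` having controlled derivative
`-∇A(x - Z_η) ∘ Z'_η`. -/
def roughVelRS (A : E3 → M3) (XX : ℝ → ℝ → M3) (Z : ℝ → E3) (Z' : ℝ → M3)
    (x : E3) {a b : ℝ} (P : Ptn a b) : E3 :=
  ∑ i ∈ Finset.range P.n,
    (A (x - Z (P.t i)) (Z (P.t (i + 1)) - Z (P.t i))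
      + comp2 (-((fderiv ℝ A (x - Z (P.t i))).comp (Z' (P.t i)))) (Z' (P.t i))
          (XX (P.t (i + 1)) (P.t i)))

/-- `V = V^Z` is the rough velocity field `V^Z(x) = ∫_0^1 A(x - Z_η) dZ_η`, each value being
the limit of compensated Riemann sums. -/
def IsRoughVelocity (A : E3 → M3) (XX : ℝ → ℝ → M3) (Z : ℝ → E3) (Z' : ℝ → M3)
    (V : E3 → E3) : Prop :=
  ∀ x : E3, RSLimit 0 1 (fun P => roughVelRS A XX Z Z' x P) (V x)

/-- Continuity of `t ↦ (Y(t), Y'(t))` from `[0,T]` into `𝒟_X` (with the norm `‖·‖_D^*`). -/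
def ContDT (γ T : ℝ) (X : ℝ → E3) (Y : ℝ → ℝ → E3) (Y' : ℝ → ℝ → M3) : Prop :=
  ∀ t ∈ Icc 0 T, ∀ ε > 0, ∃ δ > 0, ∀ s ∈ Icc 0 T, |s - t| ≤ δ →
    dnormStar γ X (fun ξ => Y s ξ - Y t ξ) (fun ξ => Y' s ξ - Y' t ξ) ≤ ε

/-- Membership in `𝐃_{X,T} = C([0,T], 𝒟_X)`. -/
def MemDT (γ T : ℝ) (X : ℝ → E3) (Y : ℝ → ℝ → E3) (Y' : ℝ → ℝ → M3) : Prop :=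
  (∀ t ∈ Icc 0 T, IsControlled γ X (Y t) (Y' t)) ∧ ContDT γ T X Y Y'

/-- The norm `‖Y‖_{𝐃_{X,T}} = sup_{t ∈ [0,T]} ‖Y(t)‖_D^*`. -/
def dxnorm (γ T : ℝ) (X : ℝ → E3) (Y : ℝ → ℝ → E3) (Y' : ℝ → ℝ → M3) : ℝ :=
  sSup {r | ∃ t ∈ Icc 0 T, r = dnormStar γ X (Y t) (Y' t)}

/-- `(Y, Y')` solves the vortex filament equation on `[0,T]` with initial condition `X`,
the velocity fields being given by rough line integrals over the rough path `(X, 𝕏²)`. -/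
def IsRoughSolution (T : ℝ) (A : E3 → M3) (X : ℝ → E3) (XX : ℝ → ℝ → M3)
    (Y : ℝ → ℝ → E3) (Y' : ℝ → ℝ → M3) : Prop :=
  ∃ v : ℝ → E3 → E3,
    (∀ s ∈ Icc 0 T, IsRoughVelocity A XX (Y s) (Y' s) (v s)) ∧
    (∀ t ∈ Icc 0 T, ∀ ξ ∈ Icc (0:ℝ) 1, Y t ξ = X ξ + ∫ s in (0:ℝ)..t, v s (Y s ξ)) ∧
    (∀ t ∈ Icc 0 T, ∀ ξ ∈ Icc (0:ℝ) 1, Y' t ξ = Fmap' v Y Y' t ξ)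

/-- `YY` is the lift (area process) `𝕐²_{ab} = ∫_a^b (Y_η - Y_a) ⊗ dY_η` of the weakly
controlled path `(Y, Y')`, defined through compensated Riemann sums. -/
def IsLift (XX : ℝ → ℝ → M3) (Y : ℝ → E3) (Y' : ℝ → M3) (YY : ℝ → ℝ → M3) : Prop :=
  ∀ a ∈ Icc (0:ℝ) 1, ∀ b ∈ Icc (0:ℝ) 1, a ≤ b →
    RSLimit a b (fun P => ∑ i ∈ Finset.range P.n,
      (oProd (Y (P.t i) - Y a) (Y (P.t (i + 1)) - Y (P.t i))
        + ctrlComp (Y' (P.t i)) (Y' (P.t i)) (XX (P.t (i + 1)) (P.t i)))) (YY a b)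

/-- `ε`-approximation `ξ ↦ ∫_0^ξ (U_{ρ+ε} - U_ρ)(W_{ρ+ε} - W_ρ) dρ / ε` of the covariation
(the processes being extended by their value at `1`). -/
def covApprox (U W : ℝ → ℝ) (ε ξ : ℝ) : ℝ :=
  ∫ ρ in (0:ℝ)..ξ, (U (min (ρ + ε) 1) - U ρ) * (W (min (ρ + ε) 1) - W ρ) / ε

/-- `C = [U, W]` is the covariation of the processes `U` and `W`: the `ε`-approximations
converge uniformly in probability (ucp) as `ε → 0⁺`. -/
def HasCovariation {Ω : Type*} [MeasurableSpace Ω] (P : Measure Ω)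
    (U W : Ω → ℝ → ℝ) (C : Ω → ℝ → ℝ) : Prop :=
  ∀ δ : ℝ, 0 < δ →
    Tendsto (fun ε : ℝ =>
        P {ω | δ ≤ ⨆ ξ : Icc (0:ℝ) 1, |covApprox (U ω) (W ω) ε ξ.1 - C ω ξ.1|})
      (𝓝[>] (0:ℝ)) (𝓝 (0:ℝ≥0∞))

/-! ### Young sums and the Young integral -/

/-- `f` is `γ`-Hölder on `[0,1]` with constant `C`. -/
def HB {F : Type*} [NormedAddCommGroup F] (γ C : ℝ) (f : ℝ → F) : Prop :=
  ∀ s ∈ Icc (0:ℝ) 1, ∀ t ∈ Icc (0:ℝ) 1, ‖f s - f t‖ ≤ C * |s - t| ^ γ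

/-- The constant `2 / (1 - 2^(1-2γ))` of Young's maximal inequality; it is the solution of
`2 · K · 2^(-2γ) + 2 = K` produced by bisection. -/
def KK (γ : ℝ) : ℝ := 2 / (1 - 2 ^ (1 - 2 * γ))

lemma KK_aux {γ : ℝ} (hγ : 1 / 2 < γ) : (2:ℝ) ^ (1 - 2 * γ) < 1 :=
  Real.rpow_lt_one_of_one_lt_of_neg (by norm_num) (by linarith)

lemma KK_pos {γ : ℝ} (hγ : 1 / 2 < γ) : 0 < KK γ :=
  div_pos two_pos (sub_pos.2 (KK_aux hγ))

lemma KK_eq {γ : ℝ} (hγ : 1 / 2 < γ) : 2 * (KK γ * (1 / 2) ^ (2 * γ)) + 2 = KK γ := by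
  have h := KK_aux hγ
  have h' : 2 * (1 / 2 : ℝ) ^ (2 * γ) = 2 ^ (1 - 2 * γ) := by
    rw [Real.rpow_sub two_pos, Real.rpow_one, one_div, Real.inv_rpow two_pos.le]; ring
  have h3 : KK γ * (1 - 2 ^ (1 - 2 * γ)) = 2 := by
    unfold KK; field_simp [(sub_pos.2 h).ne']
  rw [← h'] at h3
  linarith

/-- In a chain `t i ≤ ⋯ ≤ t j` some step crosses a given intermediate level `m`. -/
lemma exists_cross (t : ℕ → ℝ) (m : ℝ) (i : ℕ) : ∀ n : ℕ, 0 < n → t i ≤ m → m ≤ t (i + n) →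
    ∃ k, k < n ∧ t (i + k) ≤ m ∧ m ≤ t (i + k + 1) := by
  intro n
  induction n with
  | zero => intro h; omega
  | succ n ih =>
    intro _ h1 h2
    by_cases hm : t (i + n) ≤ m
    · exact ⟨n, by omega, hm, h2⟩
    · rcases Nat.eq_zero_or_pos n with h0 | h0
      · subst h0; exact absurd h1 hm
      · obtain ⟨k, hk, h⟩ := ih h0 h1 (not_le.1 hm).le
        exact ⟨k, by omega, h⟩

lemma HB.mul_le {γ Mf Mg : ℝ} (hγ : 0 ≤ γ) (hMf : 0 ≤ Mf) (hMg : 0 ≤ Mg) {f : ℝ → M3} {g : ℝ → E3}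
    (hf : HB γ Mf f) (hg : HB γ Mg g) {s t u v r : ℝ} (hs : s ∈ Icc (0:ℝ) 1)
    (ht : t ∈ Icc (0:ℝ) 1) (hu : u ∈ Icc (0:ℝ) 1) (hv : v ∈ Icc (0:ℝ) 1) (hr : 0 ≤ r)
    (h1 : |s - t| ≤ r) (h2 : |u - v| ≤ r) :
    ‖(f s - f t) (g u - g v)‖ ≤ Mf * Mg * r ^ (2 * γ) := by
  have e : r ^ (2 * γ) = r ^ γ * r ^ γ := by
    rw [mul_comm, Real.rpow_mul hr, Real.rpow_two, sq]
  calc ‖(f s - f t) (g u - g v)‖ ≤ ‖f s - f t‖ * ‖g u - g v‖ := ContinuousLinearMap.le_opNorm _ _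
    _ ≤ (Mf * |s - t| ^ γ) * (Mg * |u - v| ^ γ) := by
        gcongr
        · exact hf s hs t ht
        · exact hg u hu v hv
    _ ≤ (Mf * r ^ γ) * (Mg * r ^ γ) := by gcongr
    _ = _ := by rw [e]; ring

/-- Young's maximal inequality. The proof bisects: the chain is cut at the step crossing the
midpoint, which leaves two shorter chains of at most half the length. -/
lemma young_max {γ Mf Mg : ℝ} (hγ : 1 / 2 < γ) (hMf : 0 ≤ Mf) (hMg : 0 ≤ Mg)
    {f : ℝ → M3} {g : ℝ → E3} (hf : HB γ Mf f) (hg : HB γ Mg g) (t : ℕ → ℝ) (hmono : Monotone t)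
    (ht : ∀ k, t k ∈ Icc (0:ℝ) 1) (n : ℕ) : ∀ i : ℕ,
    ‖(∑ k ∈ Finset.Ico i (i + n), f (t k) (g (t (k + 1)) - g (t k)))
      - f (t i) (g (t (i + n)) - g (t i))‖ ≤ KK γ * (Mf * Mg) * (t (i + n) - t i) ^ (2 * γ) := by
  induction n using Nat.strong_induction_on with
  | _ n ih =>
    intro i
    rcases Nat.eq_zero_or_pos n with h0 | h0
    · subst h0
      simp [Real.zero_rpow (by linarith : 2 * γ ≠ 0)]
    have hij : t i ≤ t (i + n) := hmono (by omega)
    set m := (t i + t (i + n)) / 2 with hm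
    obtain ⟨k, hk, hk1, hk2⟩ := exists_cross t m i n h0 (by rw [hm]; linarith) (by rw [hm]; linarith)
    set w := t (i + n) - t i with hw
    have hw0 : 0 ≤ w := by rw [hw]; linarith
    have A1 := ih k hk i
    have A2 := ih (n - (k + 1)) (by omega) (i + k + 1)
    have e2 : i + k + 1 + (n - (k + 1)) = i + n := by omega
    rw [e2] at A2
    have hik : t i ≤ t (i + k) := hmono (by omega)
    have hkj : t (i + k + 1) ≤ t (i + n) := hmono (by omega)
    have hkk : t (i + k) ≤ t (i + k + 1) := hmono (by omega)
    have hhalf : (w / 2) ^ (2 * γ) = (1 / 2) ^ (2 * γ) * w ^ (2 * γ) := by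
      rw [← Real.mul_rpow (by norm_num) hw0]; ring_nf
    have B1 : (t (i + k) - t i) ^ (2 * γ) ≤ (1 / 2) ^ (2 * γ) * w ^ (2 * γ) := by
      rw [← hhalf]
      apply Real.rpow_le_rpow <;> linarith
    have B2 : (t (i + n) - t (i + k + 1)) ^ (2 * γ) ≤ (1 / 2) ^ (2 * γ) * w ^ (2 * γ) := by
      rw [← hhalf]
      apply Real.rpow_le_rpow <;> linarith
    have hK : 0 ≤ KK γ * (Mf * Mg) := mul_nonneg (KK_pos hγ).le (mul_nonneg hMf hMg)
    have C1 : ‖(f (t (i + k)) - f (t i)) (g (t (i + k + 1)) - g (t (i + k)))‖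
        ≤ Mf * Mg * w ^ (2 * γ) :=
      HB.mul_le (by linarith) hMf hMg hf hg (ht _) (ht _) (ht _) (ht _) hw0
        (by rw [abs_of_nonneg (by linarith)]; linarith)
        (by rw [abs_of_nonneg (by linarith)]; linarith)
    have C2 : ‖(f (t (i + k + 1)) - f (t i)) (g (t (i + n)) - g (t (i + k + 1)))‖
        ≤ Mf * Mg * w ^ (2 * γ) :=
      HB.mul_le (by linarith) hMf hMg hf hg (ht _) (ht _) (ht _) (ht _) hw0
        (by rw [abs_of_nonneg (by linarith)]; linarith)
        (by rw [abs_of_nonneg (by linarith)]; linarith)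
    have hsum : (∑ k ∈ Finset.Ico i (i + n), f (t k) (g (t (k + 1)) - g (t k)))
        = (∑ k ∈ Finset.Ico i (i + k), f (t k) (g (t (k + 1)) - g (t k)))
          + f (t (i + k)) (g (t (i + k + 1)) - g (t (i + k)))
          + (∑ k ∈ Finset.Ico (i + k + 1) (i + n), f (t k) (g (t (k + 1)) - g (t k))) := by
      rw [← Finset.sum_Ico_succ_top (by omega), Finset.sum_Ico_consecutive _ (by omega) (by omega)]
    set S1 := ∑ k ∈ Finset.Ico i (i + k), f (t k) (g (t (k + 1)) - g (t k))
    set S2 := ∑ k ∈ Finset.Ico (i + k + 1) (i + n), f (t k) (g (t (k + 1)) - g (t k))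
    have hid : S1 + f (t (i + k)) (g (t (i + k + 1)) - g (t (i + k))) + S2
          - f (t i) (g (t (i + n)) - g (t i))
        = (S1 - f (t i) (g (t (i + k)) - g (t i)))
          + (S2 - f (t (i + k + 1)) (g (t (i + n)) - g (t (i + k + 1))))
          + (f (t (i + k)) - f (t i)) (g (t (i + k + 1)) - g (t (i + k)))
          + (f (t (i + k + 1)) - f (t i)) (g (t (i + n)) - g (t (i + k + 1))) := by
      simp only [map_sub, _root_.sub_apply]; abel
    rw [hsum, hid]
    refine (norm_add₄_le).trans ?_
    have hfin : KK γ * (Mf * Mg) * w ^ (2 * γ)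
        = 2 * (KK γ * (Mf * Mg) * ((1 / 2) ^ (2 * γ) * w ^ (2 * γ)))
          + 2 * (Mf * Mg * w ^ (2 * γ)) := by
      have := KK_eq hγ
      calc _ = (2 * (KK γ * (1 / 2) ^ (2 * γ)) + 2) * (Mf * Mg) * w ^ (2 * γ) := by rw [this]
        _ = _ := by ring
    have D1 := mul_le_mul_of_nonneg_left B1 hK
    have D2 := mul_le_mul_of_nonneg_left B2 hK
    linarith

/-- Projection of the line onto `[a,b]` (for `a ≤ b`). -/
def clip (a b x : ℝ) : ℝ := max a (min b x)

lemma clip_mono (a b : ℝ) : Monotone (clip a b) := fun _ _ h =>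
  max_le_max le_rfl (min_le_min le_rfl h)

lemma clip_mem {a b x : ℝ} (hab : a ≤ b) (ha : 0 ≤ a) (hb : b ≤ 1) : clip a b x ∈ Icc (0:ℝ) 1 :=
  ⟨ha.trans (le_max_left _ _), (max_le hab (min_le_left _ _)).trans hb⟩

/-- The Riemann–Stieltjes term of the interval `[a,b] ∩ [c,d]`; zero if the intersection is
empty. -/
def TT (f : ℝ → M3) (g : ℝ → E3) (a b c d : ℝ) : E3 :=
  f (clip a b c) (g (clip a b d) - g (clip a b c))

lemma TT_symm (f : ℝ → M3) (g : ℝ → E3) {a b c d : ℝ} (hab : a ≤ b) (hcd : c ≤ d) :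
    TT f g a b c d = TT f g c d a b := by
  unfold TT clip
  rcases lt_or_ge b c with h | h
  · rw [min_eq_left h.le, min_eq_left (h.le.trans hcd), min_eq_right (by linarith : a ≤ d),
      min_eq_right (by linarith : b ≤ d), max_eq_left (by linarith : a ≤ c), max_eq_left h.le]
    simp
  rcases lt_or_ge d a with h' | h'
  · rw [min_eq_left h'.le, min_eq_left (h'.le.trans hab), min_eq_right h,
      min_eq_right (by linarith : d ≤ b), max_eq_left (by linarith : c ≤ a), max_eq_left h'.le]
    simp
  rw [min_eq_right h, min_eq_right h', max_eq_right (le_min hab h'),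
    max_eq_right (le_min hcd h), max_comm c a, min_comm d b]

/-- Riemann–Stieltjes sum along the first `n` steps of `p`. -/
def SS (f : ℝ → M3) (g : ℝ → E3) (p : ℕ → ℝ) (n : ℕ) : E3 :=
  ∑ i ∈ Finset.range n, f (p i) (g (p (i + 1)) - g (p i))

/-- Passing from the partition `p` to its common refinement with `q` costs `O(δ^(2γ-1))`, where
`δ` bounds the mesh of `p`. -/
lemma refine_bound {γ Mf Mg : ℝ} (hγ : 1 / 2 < γ) (hMf : 0 ≤ Mf) (hMg : 0 ≤ Mg)
    {f : ℝ → M3} {g : ℝ → E3} (hf : HB γ Mf f) (hg : HB γ Mg g) {p q : ℕ → ℝ} {n m : ℕ}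
    (hp : Monotone p) (hpI : ∀ k, p k ∈ Icc (0:ℝ) 1) (hp0 : p 0 = 0) (hpn : p n = 1)
    (hq : Monotone q) (hq0 : q 0 = 0) (hqm : q m = 1)
    {δ : ℝ} (hδ : ∀ i < n, p (i + 1) - p i ≤ δ) :
    ‖SS f g p n - ∑ i ∈ Finset.range n, ∑ j ∈ Finset.range m,
      TT f g (p i) (p (i + 1)) (q j) (q (j + 1))‖ ≤ KK γ * (Mf * Mg) * δ ^ (2 * γ - 1) := by
  have hK : 0 ≤ KK γ * (Mf * Mg) := mul_nonneg (KK_pos hγ).le (mul_nonneg hMf hMg)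
  unfold SS
  rw [← Finset.sum_sub_distrib]
  have key : ∀ i ∈ Finset.range n, ‖f (p i) (g (p (i + 1)) - g (p i)) - ∑ j ∈ Finset.range m,
      TT f g (p i) (p (i + 1)) (q j) (q (j + 1))‖
      ≤ KK γ * (Mf * Mg) * δ ^ (2 * γ - 1) * (p (i + 1) - p i) := by
    intro i hi
    have hpi : p i ≤ p (i + 1) := hp (by omega)
    have h := young_max hγ hMf hMg hf hg (fun j => clip (p i) (p (i + 1)) (q j))
      ((clip_mono _ _).comp hq) (fun k => clip_mem hpi (hpI _).1 (hpI _).2) m 0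
    have c0 : clip (p i) (p (i + 1)) 0 = p i := by
      unfold clip; rw [min_eq_right (hpI _).1, max_eq_left (hpI _).1]
    have c1 : clip (p i) (p (i + 1)) 1 = p (i + 1) := by
      unfold clip; rw [min_eq_left (hpI _).2, max_eq_right hpi]
    simp only [zero_add, hq0, hqm, c0, c1] at h
    rw [norm_sub_rev, Finset.range_eq_Ico]
    refine h.trans ?_
    rw [mul_assoc (KK γ * (Mf * Mg))]
    apply mul_le_mul_of_nonneg_left _ hK
    rcases hpi.eq_or_lt with he | hl
    · rw [he, sub_self, Real.zero_rpow (by linarith)]; simp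
    · have hx : 0 < p (i + 1) - p i := sub_pos.2 hl
      calc (p (i + 1) - p i) ^ (2 * γ) = (p (i + 1) - p i) ^ (2 * γ - 1) * (p (i + 1) - p i) := by
            rw [Real.rpow_sub_one hx.ne']; field_simp
        _ ≤ _ := by
            apply mul_le_mul_of_nonneg_right _ hx.le
            exact Real.rpow_le_rpow hx.le (hδ i (Finset.mem_range.1 hi)) (by linarith)
  refine (norm_sum_le _ _).trans ((Finset.sum_le_sum key).trans ?_)
  rw [← Finset.mul_sum, Finset.sum_range_sub, hp0, hpn]
  simp

/-- Riemann–Stieltjes sums over two partitions of mesh at most `δ` are close. Both are compared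
with the sum over the common refinement, which is symmetric in the two partitions. -/
lemma SS_cauchy {γ Mf Mg : ℝ} (hγ : 1 / 2 < γ) (hMf : 0 ≤ Mf) (hMg : 0 ≤ Mg)
    {f : ℝ → M3} {g : ℝ → E3} (hf : HB γ Mf f) (hg : HB γ Mg g) {p q : ℕ → ℝ} {n m : ℕ}
    (hp : Monotone p) (hpI : ∀ k, p k ∈ Icc (0:ℝ) 1) (hp0 : p 0 = 0) (hpn : p n = 1)
    (hq : Monotone q) (hqI : ∀ k, q k ∈ Icc (0:ℝ) 1) (hq0 : q 0 = 0) (hqm : q m = 1)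
    {δ : ℝ} (hδ : ∀ i < n, p (i + 1) - p i ≤ δ) (hδ' : ∀ i < m, q (i + 1) - q i ≤ δ) :
    ‖SS f g p n - SS f g q m‖ ≤ 2 * (KK γ * (Mf * Mg)) * δ ^ (2 * γ - 1) := by
  have h1 := refine_bound hγ hMf hMg hf hg hp hpI hp0 hpn hq hq0 hqm hδ
  have h2 := refine_bound hγ hMf hMg hf hg hq hqI hq0 hqm hp hp0 hpn hδ'
  rw [Finset.sum_comm] at h2
  have e : ∑ i ∈ Finset.range n, ∑ j ∈ Finset.range m, TT f g (q j) (q (j + 1)) (p i) (p (i + 1))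
      = ∑ i ∈ Finset.range n, ∑ j ∈ Finset.range m,
      TT f g (p i) (p (i + 1)) (q j) (q (j + 1)) :=
    Finset.sum_congr rfl fun i _ => Finset.sum_congr rfl fun j _ =>
      TT_symm f g (hq (by omega)) (hp (by omega))
  rw [e, norm_sub_rev] at h2
  have := norm_sub_le_norm_sub_add_norm_sub (SS f g p n) (∑ i ∈ Finset.range n,
    ∑ j ∈ Finset.range m, TT f g (p i) (p (i + 1)) (q j) (q (j + 1))) (SS f g q m)
  linarith

/-- The sequence of points of a partition, frozen after its last point so as to be monotone. -/
def ptnSeq (P : Ptn 0 1) (k : ℕ) : ℝ := P.t (min k P.n)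

lemma ptnSeq_mono (P : Ptn 0 1) : Monotone (ptnSeq P) := by
  apply monotone_nat_of_le_succ
  intro k
  unfold ptnSeq
  rcases lt_or_ge k P.n with h | h
  · rw [min_eq_left h.le, min_eq_left (by omega)]; exact P.mono k h
  · rw [min_eq_right h, min_eq_right (by omega)]

lemma ptnSeq_zero (P : Ptn 0 1) : ptnSeq P 0 = 0 := by simp [ptnSeq, P.first]

lemma ptnSeq_last (P : Ptn 0 1) : ptnSeq P P.n = 1 := by simp [ptnSeq, P.last]

lemma ptnSeq_mem (P : Ptn 0 1) (k : ℕ) : ptnSeq P k ∈ Icc (0:ℝ) 1 := by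
  constructor
  · rw [← ptnSeq_zero P]; exact ptnSeq_mono P (Nat.zero_le _)
  · have : ptnSeq P k = ptnSeq P (min k P.n) := by simp [ptnSeq]
    exact this.le.trans ((ptnSeq_mono P (min_le_right _ _)).trans (ptnSeq_last P).le)

lemma ptnSeq_of_le (P : Ptn 0 1) {k : ℕ} (h : k ≤ P.n) : ptnSeq P k = P.t k := by
  simp [ptnSeq, min_eq_left h]

lemma Ptn.mem (P : Ptn 0 1) {k : ℕ} (h : k ≤ P.n) : P.t k ∈ Icc (0:ℝ) 1 := by
  rw [← ptnSeq_of_le P h]; exact ptnSeq_mem P k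

/-- Riemann–Stieltjes sum `Σ f(t_i) (g(t_{i+1}) - g(t_i))`. -/
def ySum (f : ℝ → M3) (g : ℝ → E3) (P : Ptn 0 1) : E3 :=
  ∑ i ∈ Finset.range P.n, f (P.t i) (g (P.t (i + 1)) - g (P.t i))

lemma ySum_eq (f : ℝ → M3) (g : ℝ → E3) (P : Ptn 0 1) : ySum f g P = SS f g (ptnSeq P) P.n := by
  unfold ySum SS
  refine Finset.sum_congr rfl fun i hi => ?_
  have := Finset.mem_range.1 hi
  rw [ptnSeq_of_le P (by omega), ptnSeq_of_le P (by omega)]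

lemma ySum_cauchy {γ Mf Mg : ℝ} (hγ : 1 / 2 < γ) (hMf : 0 ≤ Mf) (hMg : 0 ≤ Mg)
    {f : ℝ → M3} {g : ℝ → E3} (hf : HB γ Mf f) (hg : HB γ Mg g) (P Q : Ptn 0 1) {δ : ℝ}
    (hP : P.MeshLE δ) (hQ : Q.MeshLE δ) :
    ‖ySum f g P - ySum f g Q‖ ≤ 2 * (KK γ * (Mf * Mg)) * δ ^ (2 * γ - 1) := by
  rw [ySum_eq, ySum_eq]
  refine SS_cauchy hγ hMf hMg hf hg (ptnSeq_mono P) (ptnSeq_mem P) (ptnSeq_zero P) (ptnSeq_last P)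
    (ptnSeq_mono Q) (ptnSeq_mem Q) (ptnSeq_zero Q) (ptnSeq_last Q) ?_ ?_
  · intro i hi
    rw [ptnSeq_of_le P (by omega), ptnSeq_of_le P (by omega)]; exact hP i hi
  · intro i hi
    rw [ptnSeq_of_le Q (by omega), ptnSeq_of_le Q (by omega)]; exact hQ i hi

/-- The uniform partition of `[0,1]` into `n + 1` intervals. -/
def uP (n : ℕ) : Ptn 0 1 where
  n := n + 1
  t k := k / (n + 1)
  first := by simp
  last := by push_cast; exact div_self (by positivity)
  mono i _ := by gcongr; omega

lemma uP_mesh (n : ℕ) : (uP n).MeshLE (1 / ((n : ℝ) + 1)) := by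
  intro i _
  simp only [uP]
  push_cast
  rw [← sub_div]; simp

lemma Ptn.MeshLE.mono {P : Ptn 0 1} {δ δ' : ℝ} (h : P.MeshLE δ) (hd : δ ≤ δ') : P.MeshLE δ' :=
  fun i hi => (h i hi).trans hd

lemma exists_uP {δ : ℝ} (hδ : 0 < δ) : ∃ P : Ptn 0 1, P.MeshLE δ := by
  obtain ⟨n, hn⟩ := exists_nat_one_div_lt hδ
  exact ⟨uP n, (uP_mesh n).mono hn.le⟩

lemma RSLimit.unique {S : Ptn 0 1 → E3} {I J : E3} (hI : RSLimit 0 1 S I) (hJ : RSLimit 0 1 S J) :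
    I = J := by
  rw [← sub_eq_zero, ← norm_le_zero_iff]
  refine le_of_forall_pos_le_add fun ε hε => ?_
  obtain ⟨d1, h1, H1⟩ := hI (ε / 2) (by positivity)
  obtain ⟨d2, h2, H2⟩ := hJ (ε / 2) (by positivity)
  obtain ⟨P, hP⟩ := exists_uP (lt_min h1 h2)
  have a := H1 P (hP.mono (min_le_left _ _))
  have b := H2 P (hP.mono (min_le_right _ _))
  have := norm_sub_le_norm_sub_add_norm_sub I (S P) J
  rw [norm_sub_rev I (S P)] at this
  linarith

lemma RSLimit.add {S S' : Ptn 0 1 → E3} {I J : E3} (hI : RSLimit 0 1 S I)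
    (hJ : RSLimit 0 1 S' J) : RSLimit 0 1 (fun P => S P + S' P) (I + J) := by
  intro ε hε
  obtain ⟨d1, h1, H1⟩ := hI (ε / 2) (by positivity)
  obtain ⟨d2, h2, H2⟩ := hJ (ε / 2) (by positivity)
  refine ⟨min d1 d2, lt_min h1 h2, fun P hP => ?_⟩
  have a := H1 P (hP.mono (min_le_left _ _))
  have b := H2 P (hP.mono (min_le_right _ _))
  rw [add_sub_add_comm]
  exact (norm_add_le _ _).trans (by linarith)

lemma RSLimit.neg {S : Ptn 0 1 → E3} {I : E3} (hI : RSLimit 0 1 S I) :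
    RSLimit 0 1 (fun P => - S P) (- I) := by
  intro ε hε
  obtain ⟨d1, h1, H1⟩ := hI ε hε
  refine ⟨d1, h1, fun P hP => ?_⟩
  rw [neg_sub_neg, norm_sub_rev]; exact H1 P hP

lemma exists_young {γ Mf Mg : ℝ} (hγ : 1 / 2 < γ) (hMf : 0 ≤ Mf) (hMg : 0 ≤ Mg)
    {f : ℝ → M3} {g : ℝ → E3} (hf : HB γ Mf f) (hg : HB γ Mg g) :
    ∃ I, RSLimit 0 1 (ySum f g) I := by
  have hpow : Tendsto (fun δ : ℝ => 2 * (KK γ * (Mf * Mg)) * δ ^ (2 * γ - 1)) (𝓝 0) (𝓝 0) := by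
    have h : Tendsto (fun δ : ℝ => δ ^ (2 * γ - 1)) (𝓝 0) (𝓝 (0 ^ (2 * γ - 1))) :=
      (Real.continuousAt_rpow_const 0 (2 * γ - 1) (Or.inr (by linarith))).tendsto
    rw [Real.zero_rpow (by linarith)] at h
    simpa using h.const_mul (2 * (KK γ * (Mf * Mg)))
  have hsmall : ∀ ε > 0, ∃ δ > 0, 2 * (KK γ * (Mf * Mg)) * δ ^ (2 * γ - 1) ≤ ε := by
    intro ε hε
    obtain ⟨δ, hδ, h⟩ := Metric.eventually_nhds_iff.1 (hpow.eventually (gt_mem_nhds hε))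
    refine ⟨δ / 2, by positivity, (h ?_).le⟩
    rw [Real.dist_eq, sub_zero, abs_of_pos (by positivity)]; linarith
  have hev : ∀ δ > 0, ∃ N, ∀ n ≥ N, (uP n).MeshLE δ := by
    intro δ hδ
    obtain ⟨N, hN⟩ := exists_nat_one_div_lt hδ
    exact ⟨N, fun n hn => (uP_mesh n).mono ((Nat.one_div_le_one_div hn).trans hN.le)⟩
  have hc : CauchySeq fun n => ySum f g (uP n) := by
    rw [Metric.cauchySeq_iff']
    intro ε hε
    obtain ⟨δ, hδ, h⟩ := hsmall (ε / 2) (by positivity)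
    obtain ⟨N, hN⟩ := hev δ hδ
    refine ⟨N, fun n hn => ?_⟩
    rw [dist_eq_norm]
    have := ySum_cauchy hγ hMf hMg hf hg _ _ (hN n hn) (hN N le_rfl)
    linarith
  obtain ⟨I, hI⟩ := cauchySeq_tendsto_of_complete hc
  refine ⟨I, fun ε hε => ?_⟩
  obtain ⟨δ, hδ, h⟩ := hsmall ε hε
  obtain ⟨N, hN⟩ := hev δ hδ
  refine ⟨δ, hδ, fun P hP => ?_⟩
  refine le_of_tendsto ((tendsto_const_nhds.sub hI).norm) ?_
  filter_upwards [eventually_ge_atTop N] with n hn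
  exact (ySum_cauchy hγ hMf hMg hf hg _ _ hP (hN n hn)).trans h

open Classical in
/-- The Young integral `∫_0^1 f dg` (zero if the Riemann–Stieltjes sums do not converge). -/
def yInt (f : ℝ → M3) (g : ℝ → E3) : E3 :=
  if h : ∃ I, RSLimit 0 1 (ySum f g) I then h.choose else 0

lemma yInt_spec {γ Mf Mg : ℝ} (hγ : 1 / 2 < γ) (hMf : 0 ≤ Mf) (hMg : 0 ≤ Mg)
    {f : ℝ → M3} {g : ℝ → E3} (hf : HB γ Mf f) (hg : HB γ Mg g) :
    RSLimit 0 1 (ySum f g) (yInt f g) := by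
  have h := exists_young hγ hMf hMg hf hg
  unfold yInt
  rw [dif_pos h]
  exact h.choose_spec

/-- Along a closed curve the Young integral is controlled by the Hölder constants alone. -/
lemma yInt_bound {γ Mf Mg : ℝ} (hγ : 1 / 2 < γ) (hMf : 0 ≤ Mf) (hMg : 0 ≤ Mg)
    {f : ℝ → M3} {g : ℝ → E3} (hf : HB γ Mf f) (hg : HB γ Mg g) (hcl : g 0 = g 1) :
    ‖yInt f g‖ ≤ KK γ * (Mf * Mg) := by
  refine le_of_forall_pos_le_add fun ε hε => ?_
  obtain ⟨δ, hδ, h⟩ := yInt_spec hγ hMf hMg hf hg ε hε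
  obtain ⟨P, hP⟩ := exists_uP hδ
  have h1 := h P hP
  have h2 := young_max hγ hMf hMg hf hg (ptnSeq P) (ptnSeq_mono P) (ptnSeq_mem P) P.n 0
  simp only [zero_add, ptnSeq_zero, ptnSeq_last, ← hcl, sub_self, map_zero, sub_zero,
    Real.one_rpow, mul_one, ← Finset.range_eq_Ico] at h2
  have h3 : ‖ySum f g P‖ ≤ KK γ * (Mf * Mg) := by rw [ySum_eq]; exact h2
  have := norm_le_norm_add_norm_sub' (yInt f g) (ySum f g P)
  rw [norm_sub_rev] at this
  linarith

/-- Bilinearity of the Young integral, as the product rule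
`∫ f dg - ∫ f' dg' = ∫ (f - f') dg + ∫ f' d(g - g')`. -/
lemma yInt_sub {γ Mf Mf' Mg Mg' : ℝ} (hγ : 1 / 2 < γ) (hMf : 0 ≤ Mf) (hMg : 0 ≤ Mg)
    (hMf' : 0 ≤ Mf') (hMg' : 0 ≤ Mg')
    {f f' : ℝ → M3} {g g' : ℝ → E3} (hf : HB γ Mf f) (hg : HB γ Mg g)
    (hf' : HB γ Mf' f') (hg' : HB γ Mg' g') :
    yInt f g - yInt f' g' = yInt (fun s => f s - f' s) g + yInt f' (fun s => g s - g' s) := by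
  have hfd : HB γ (Mf + Mf') (fun s => f s - f' s) := by
    intro s hs t ht
    rw [sub_sub_sub_comm, add_mul]
    exact (norm_sub_le _ _).trans (add_le_add (hf s hs t ht) (hf' s hs t ht))
  have hgd : HB γ (Mg + Mg') (fun s => g s - g' s) := by
    intro s hs t ht
    rw [sub_sub_sub_comm, add_mul]
    exact (norm_sub_le _ _).trans (add_le_add (hg s hs t ht) (hg' s hs t ht))
  have a := yInt_spec hγ hMf hMg hf hg
  have b := (yInt_spec hγ hMf' hMg' hf' hg').neg
  have c := yInt_spec hγ (add_nonneg hMf hMf') hMg hfd hg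
  have d := yInt_spec hγ hMf' (add_nonneg hMg hMg') hf' hgd
  have e : (fun P => ySum f g P + - ySum f' g' P) = fun P =>
      ySum (fun s => f s - f' s) g P + ySum f' (fun s => g s - g' s) P := by
    funext P
    unfold ySum
    rw [← sub_eq_add_neg, ← Finset.sum_sub_distrib, ← Finset.sum_add_distrib]
    refine Finset.sum_congr rfl fun i _ => ?_
    simp only [map_sub, _root_.sub_apply]; abel
  have ab := a.add b
  rw [e] at ab
  rw [sub_eq_add_neg]
  exact ab.unique (c.add d)

/-! ### Finite differences of the kernel -/

/-- Quantitative consequences of `‖∇A‖_2 < ∞` : first-order and second-order difference bounds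
for `A` and for `∇A`, all with the same constant `L`. -/
structure ABd (A : E3 → M3) (L : ℝ) : Prop where
  nonneg : 0 ≤ L
  diff : Differentiable ℝ A
  bd : ∀ x, ‖fderiv ℝ A x‖ ≤ L
  lip : ∀ x y, ‖A x - A y‖ ≤ L * ‖x - y‖
  lip' : ∀ x y, ‖fderiv ℝ A x - fderiv ℝ A y‖ ≤ L * ‖x - y‖
  corner : ∀ x x' y y', ‖A (x - y) - A (x' - y) - A (x - y') + A (x' - y')‖
    ≤ L * (‖x - x'‖ * ‖y - y'‖)
  corner' : ∀ x x' y y', ‖fderiv ℝ A (x - y) - fderiv ℝ A (x' - y) - fderiv ℝ A (x - y')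
    + fderiv ℝ A (x' - y')‖ ≤ L * (‖x - x'‖ * ‖y - y'‖)

lemma lip_of_fderiv {F : Type*} [NormedAddCommGroup F] [NormedSpace ℝ F] {H : E3 → F} {L : ℝ}
    (hd : Differentiable ℝ H) (hb : ∀ x, ‖fderiv ℝ H x‖ ≤ L) (x y : E3) :
    ‖H x - H y‖ ≤ L * ‖x - y‖ :=
  convex_univ.norm_image_sub_le_of_norm_fderiv_le (𝕜 := ℝ) (fun z _ => hd z) (fun z _ => hb z)
    (mem_univ y) (mem_univ x)

/-- A Lipschitz derivative bounds the mixed second difference of `(x, y) ↦ H (x - y)`. -/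
lemma corner_of_fderiv {F : Type*} [NormedAddCommGroup F] [NormedSpace ℝ F] {H : E3 → F} {L : ℝ}
    (hd : Differentiable ℝ H) (hb : ∀ x y, ‖fderiv ℝ H x - fderiv ℝ H y‖ ≤ L * ‖x - y‖)
    (x x' y y' : E3) :
    ‖H (x - y) - H (x' - y) - H (x - y') + H (x' - y')‖ ≤ L * (‖x - x'‖ * ‖y - y'‖) := by
  have hg : ∀ z, HasFDerivAt (fun z => H (z - y) - H (z - y'))
      (fderiv ℝ H (z - y) - fderiv ℝ H (z - y')) z := by
    intro z
    have h1 : HasFDerivAt (fun z => H (z - y)) (fderiv ℝ H (z - y)) z :=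
      (hd (z - y)).hasFDerivAt.comp z ((hasFDerivAt_id z).sub_const y)
    have h2 : HasFDerivAt (fun z => H (z - y')) (fderiv ℝ H (z - y')) z :=
      (hd (z - y')).hasFDerivAt.comp z ((hasFDerivAt_id z).sub_const y')
    exact h1.sub h2
  have h := lip_of_fderiv (H := fun z => H (z - y) - H (z - y')) (L := L * ‖y - y'‖)
    (fun z => (hg z).differentiableAt) (fun z => by
      rw [(hg z).fderiv]
      refine (hb _ _).trans (le_of_eq ?_)
      rw [sub_sub_sub_cancel_left, norm_sub_rev]) x x'
  calc _ = ‖H (x - y) - H (x - y') - (H (x' - y) - H (x' - y'))‖ := by congr 1; abel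
    _ ≤ _ := h
    _ = _ := by ring

lemma fderiv_lip {F : Type*} [NormedAddCommGroup F] [NormedSpace ℝ F] {H : E3 → F} {L : ℝ}
    (hc : ContDiff ℝ 2 H) (hb : ∀ x, ‖iteratedFDeriv ℝ 2 H x‖ ≤ L) (x y : E3) :
    ‖fderiv ℝ H x - fderiv ℝ H y‖ ≤ L * ‖x - y‖ := by
  have c1 : ContDiff ℝ 1 (fderiv ℝ H) := hc.fderiv_right (by norm_num)
  refine lip_of_fderiv (c1.differentiable (by norm_num)) (fun x => ?_) x y
  rw [← norm_iteratedFDeriv_one, norm_iteratedFDeriv_fderiv]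
  exact hb x

lemma NablaBdd.abd {A : E3 → M3} (hA : NablaBdd 1 2 A) : ∃ L, ABd A L := by
  obtain ⟨hc, hb⟩ := hA
  have hc : ContDiff ℝ 3 A := by
    convert hc using 1; norm_num
  obtain ⟨L1, h1⟩ := hb 1 le_rfl (by norm_num)
  obtain ⟨L2, h2⟩ := hb 2 (by norm_num) (by norm_num)
  obtain ⟨L3, h3⟩ := hb 3 (by norm_num) (by norm_num)
  set L := max L1 (max L2 L3)
  have b1 : ∀ x, ‖fderiv ℝ A x‖ ≤ L := fun x => by
    rw [← norm_iteratedFDeriv_one]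
    exact (h1 ⟨x, rfl⟩).trans (le_max_left _ _)
  have c1 : ContDiff ℝ 2 (fderiv ℝ A) := hc.fderiv_right (by norm_num)
  have d0 := hc.differentiable (by norm_num)
  have d1 := c1.differentiable (by norm_num)
  have b2 := fderiv_lip (H := A) (L := L) (hc.of_le (by norm_num)) (fun x =>
    (h2 ⟨x, rfl⟩).trans ((le_max_left _ _).trans (le_max_right _ _)))
  have b3 := fderiv_lip (H := fderiv ℝ A) (L := L) c1 (fun x => by
    rw [norm_iteratedFDeriv_fderiv]
    exact (h3 ⟨x, rfl⟩).trans ((le_max_right _ _).trans (le_max_right _ _)))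
  exact ⟨L, (norm_nonneg (fderiv ℝ A 0)).trans (b1 0), d0, b1, lip_of_fderiv d0 b1, b2,
    corner_of_fderiv d0 b2, corner_of_fderiv d1 b3⟩

/-- Derivative in `τ` of `A` along the segment from `q` to `p`. -/
lemma seg_deriv {A : E3 → M3} {L : ℝ} (hA : ABd A L) (p q : E3) (τ : ℝ) :
    HasDerivAt (fun τ : ℝ => A (q + τ • (p - q))) (fderiv ℝ A (q + τ • (p - q)) (p - q)) τ := by
  have h : HasDerivAt (fun τ : ℝ => q + τ • (p - q)) (p - q) τ := by
    simpa using ((hasDerivAt_id τ).smul_const (p - q)).const_add q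
  exact (hA.diff _).hasFDerivAt.comp_hasDerivAt τ h

lemma mvt01 {φ φ' : ℝ → M3} {C : ℝ} (h : ∀ τ, HasDerivAt φ (φ' τ) τ)
    (hb : ∀ τ ∈ Icc (0:ℝ) 1, ‖φ' τ‖ ≤ C) : ‖φ 1 - φ 0‖ ≤ C :=
  norm_image_sub_le_of_norm_deriv_le_segment_01' (fun x _ => (h x).hasDerivWithinAt)
    (fun x hx => hb x ⟨hx.1, hx.2.le⟩)

lemma seg_norm {a b : E3} {C τ : ℝ} (hτ : τ ∈ Icc (0:ℝ) 1) (ha : ‖a‖ ≤ C) (hb : ‖b‖ ≤ C) :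
    ‖b + τ • (a - b)‖ ≤ C := by
  have e : b + τ • (a - b) = (1 - τ) • b + τ • a := by module
  rw [e]
  refine (norm_add_le _ _).trans ?_
  rw [norm_smul, norm_smul, Real.norm_of_nonneg hτ.1, Real.norm_of_nonneg (sub_nonneg.2 hτ.2)]
  nlinarith [hτ.1, hτ.2]

/-- Difference, between two configurations `(x,y,y')` and `(u,v,v')`, of a first-order
difference of `A`; obtained by differentiating along the segment joining the configurations. -/
lemma diff2 {A : E3 → M3} {L : ℝ} (hA : ABd A L) {x y y' u v v' : E3} {R D r' : ℝ}
    (hR : 0 ≤ R) (hD : 0 ≤ D) (hr' : 0 ≤ r')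
    (h1 : ‖y - y'‖ ≤ R * r') (h2 : ‖v - v'‖ ≤ R * r')
    (h3 : ‖(y - v) - (y' - v')‖ ≤ D * r') (h4 : ‖(x - u) - (y - v)‖ ≤ D) :
    ‖(A (x - y) - A (u - v)) - (A (x - y') - A (u - v'))‖ ≤ L * (R + 1) * D * r' := by
  have hL := hA.nonneg
  have H := mvt01 (C := L * (R + 1) * D * r')
    (fun τ => (seg_deriv hA (x - y) (u - v) τ).sub (seg_deriv hA (x - y') (u - v') τ)) ?_
  · simp only [Pi.sub_apply, one_smul, zero_smul, add_zero, add_sub_cancel] at H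
    calc _ = _ := by congr 1; abel
      _ ≤ _ := H
  intro τ hτ
  set G := fderiv ℝ A (u - v + τ • (x - y - (u - v)))
  set G' := fderiv ℝ A (u - v' + τ • (x - y' - (u - v')))
  have e : G (x - y - (u - v)) - G' (x - y' - (u - v'))
      = (G - G') (x - u - (y - v)) - G' (y - v - (y' - v')) := by
    have e1 : x - y - (u - v) = x - u - (y - v) := by abel
    have e2 : x - y' - (u - v') = x - u - (y - v) + (y - v - (y' - v')) := by abel
    rw [e1, e2, map_add, _root_.sub_apply]; abel
  rw [e]
  have hG : ‖G - G'‖ ≤ L * (R * r') := by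
    refine (hA.lip' _ _).trans (mul_le_mul_of_nonneg_left ?_ hL)
    have e3 : u - v + τ • (x - y - (u - v)) - (u - v' + τ • (x - y' - (u - v')))
        = -((v - v') + τ • ((y - y') - (v - v'))) := by module
    rw [e3, norm_neg]
    exact seg_norm hτ h1 h2
  calc _ ≤ ‖(G - G') (x - u - (y - v))‖ + ‖G' (y - v - (y' - v'))‖ := norm_sub_le _ _
    _ ≤ ‖G - G'‖ * ‖x - u - (y - v)‖ + ‖G'‖ * ‖y - v - (y' - v')‖ :=
        add_le_add (ContinuousLinearMap.le_opNorm _ _) (ContinuousLinearMap.le_opNorm _ _)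
    _ ≤ L * (R * r') * D + L * (D * r') := by
        gcongr
        exact hA.bd _
    _ = _ := by ring

/-- Difference, between two configurations `(x,x',y,y')` and `(u,u',v,v')`, of a second-order
difference of `A`. The displacement `(x - u) - (y - v)` has vanishing mixed difference, so the
product rule leaves only three terms. -/
lemma diff3 {A : E3 → M3} {L : ℝ} (hA : ABd A L) {x x' y y' u u' v v' : E3} {R D r r' : ℝ}
    (hR : 0 ≤ R) (hD : 0 ≤ D) (hr : 0 ≤ r) (hr' : 0 ≤ r')
    (h1 : ‖y - y'‖ ≤ R * r') (h2 : ‖v - v'‖ ≤ R * r')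
    (h1' : ‖x - x'‖ ≤ R * r) (h2' : ‖u - u'‖ ≤ R * r)
    (h3 : ‖(y - v) - (y' - v')‖ ≤ D * r') (h3' : ‖(x - u) - (x' - u')‖ ≤ D * r)
    (h4 : ‖(x - u) - (y - v)‖ ≤ D) :
    ‖((A (x - y) - A (u - v)) - (A (x' - y) - A (u' - v)))
      - ((A (x - y') - A (u - v')) - (A (x' - y') - A (u' - v')))‖
      ≤ L * (R ^ 2 + 2 * R) * D * r * r' := by
  have hL := hA.nonneg
  have H := mvt01 (C := L * (R ^ 2 + 2 * R) * D * r * r')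
    (fun τ => (((seg_deriv hA (x - y) (u - v) τ).sub (seg_deriv hA (x' - y) (u' - v) τ)).sub
      (seg_deriv hA (x - y') (u - v') τ)).add (seg_deriv hA (x' - y') (u' - v') τ)) ?_
  · simp only [Pi.sub_apply, Pi.add_apply, one_smul, zero_smul, add_zero, add_sub_cancel] at H
    calc _ = _ := by congr 1; abel
      _ ≤ _ := H
  intro τ hτ
  -- the four points along the segment are differences `X - Y` of interpolated points
  set Xt := u + τ • (x - u) with hX
  set Xt' := u' + τ • (x' - u') with hX'
  set Yt := v + τ • (y - v) with hY
  set Yt' := v' + τ • (y' - v') with hY'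
  have p00 : u - v + τ • (x - y - (u - v)) = Xt - Yt := by rw [hX, hY]; module
  have p10 : u' - v + τ • (x' - y - (u' - v)) = Xt' - Yt := by rw [hX', hY]; module
  have p01 : u - v' + τ • (x - y' - (u - v')) = Xt - Yt' := by rw [hX, hY']; module
  have p11 : u' - v' + τ • (x' - y' - (u' - v')) = Xt' - Yt' := by rw [hX', hY']; module
  rw [p00, p10, p01, p11]
  have hXX : ‖Xt - Xt'‖ ≤ R * r := by
    have e : Xt - Xt' = (u - u') + τ • ((x - x') - (u - u')) := by rw [hX, hX']; module
    rw [e]; exact seg_norm hτ h1' h2'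
  have hYY : ‖Yt - Yt'‖ ≤ R * r' := by
    have e : Yt - Yt' = (v - v') + τ • ((y - y') - (v - v')) := by rw [hY, hY']; module
    rw [e]; exact seg_norm hτ h1 h2
  set G00 := fderiv ℝ A (Xt - Yt) with g00
  set G10 := fderiv ℝ A (Xt' - Yt) with g10
  set G01 := fderiv ℝ A (Xt - Yt') with g01
  set G11 := fderiv ℝ A (Xt' - Yt') with g11
  have e : G00 (x - y - (u - v)) - G10 (x' - y - (u' - v)) - G01 (x - y' - (u - v'))
        + G11 (x' - y' - (u' - v'))
      = (G00 - G10 - G01 + G11) (x - u - (y - v)) + (G10 - G11) (x - u - (x' - u'))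
        + (G11 - G01) (y - v - (y' - v')) := by
    have e1 : x - y - (u - v) = x - u - (y - v) := by abel
    have e2 : x' - y - (u' - v) = x - u - (y - v) - (x - u - (x' - u')) := by abel
    have e3 : x - y' - (u - v') = x - u - (y - v) + (y - v - (y' - v')) := by abel
    have e4 : x' - y' - (u' - v')
      = x - u - (y - v) - (x - u - (x' - u')) + (y - v - (y' - v')) := by abel
    rw [e1, e2, e3, e4]
    simp only [map_add, map_sub, _root_.sub_apply, _root_.add_apply]; abel
  rw [e]
  have b1 : ‖G00 - G10 - G01 + G11‖ ≤ L * ((R * r) * (R * r')) := by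
    refine (hA.corner' Xt Xt' Yt Yt').trans ?_
    gcongr
  have b2 : ‖G10 - G11‖ ≤ L * (R * r') := by
    refine (hA.lip' _ _).trans (mul_le_mul_of_nonneg_left ?_ hL)
    rw [sub_sub_sub_cancel_left, norm_sub_rev]; exact hYY
  have b3 : ‖G11 - G01‖ ≤ L * (R * r) := by
    refine (hA.lip' _ _).trans (mul_le_mul_of_nonneg_left ?_ hL)
    rw [sub_sub_sub_cancel_right, norm_sub_rev]; exact hXX
  calc _ ≤ ‖(G00 - G10 - G01 + G11) (x - u - (y - v))‖ + ‖(G10 - G11) (x - u - (x' - u'))‖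
        + ‖(G11 - G01) (y - v - (y' - v'))‖ := norm_add₃_le
    _ ≤ ‖G00 - G10 - G01 + G11‖ * ‖x - u - (y - v)‖ + ‖G10 - G11‖ * ‖x - u - (x' - u')‖
        + ‖G11 - G01‖ * ‖y - v - (y' - v')‖ :=
        add_le_add (add_le_add (ContinuousLinearMap.le_opNorm _ _)
          (ContinuousLinearMap.le_opNorm _ _)) (ContinuousLinearMap.le_opNorm _ _)
    _ ≤ L * ((R * r) * (R * r')) * D + L * (R * r') * (D * r) + L * (R * r) * (D * r') := by
        gcongr
    _ = _ := by ring

/-! ### The velocity field along a closed Hölder curve -/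

/-- The velocity of the curve `Z` at its own points: `ξ ↦ V^Z(Z_ξ) = ∫_0^1 A(Z_ξ - Z_η) dZ_η`. -/
def FF (A : E3 → M3) (Z : ℝ → E3) (ξ : ℝ) : E3 := yInt (fun η => A (Z ξ - Z η)) Z

section
variable {A : E3 → M3} {L γ R D : ℝ} {Z W : ℝ → E3}

lemma HB.kernel (hA : ABd A L) (hZ : HB γ R Z) (x : E3) :
    HB γ (L * R) (fun η => A (x - Z η)) := by
  intro s hs t ht
  refine (hA.lip _ _).trans ?_
  rw [sub_sub_sub_cancel_left, norm_sub_rev, mul_assoc]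
  exact mul_le_mul_of_nonneg_left (hZ s hs t ht) hA.nonneg

lemma HB.le_one (hγ : 1 / 2 < γ) (hR : 0 ≤ R) (hZ : HB γ R Z) {s t : ℝ} (hs : s ∈ Icc (0:ℝ) 1)
    (ht : t ∈ Icc (0:ℝ) 1) : ‖Z s - Z t‖ ≤ R := by
  refine (hZ s hs t ht).trans (mul_le_of_le_one_right hR ?_)
  refine Real.rpow_le_one (abs_nonneg _) ?_ (by linarith)
  rw [abs_le]; constructor <;> linarith [hs.1, hs.2, ht.1, ht.2]

/-- `V^Z` is Lipschitz. -/
lemma V_lip (hA : ABd A L) (hγ : 1 / 2 < γ) (hR : 0 ≤ R) (hZ : HB γ R Z) (hcl : Z 0 = Z 1)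
    (x x' : E3) : ‖yInt (fun η => A (x - Z η)) Z - yInt (fun η => A (x' - Z η)) Z‖
      ≤ KK γ * (L * R ^ 2) * ‖x - x'‖ := by
  have hL := hA.nonneg
  have hLR := mul_nonneg hL hR
  rw [yInt_sub hγ hLR hR hLR hR (hZ.kernel hA x) hZ (hZ.kernel hA x') hZ]
  have h0 : ‖yInt (fun η => A (x' - Z η)) (fun s => Z s - Z s)‖ ≤ KK γ * (L * R * 0) :=
    yInt_bound hγ hLR le_rfl (hZ.kernel hA x') (fun s _ t _ => by simp) (by simp)
  have h1 : ‖yInt (fun η => A (x - Z η) - A (x' - Z η)) Z‖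
      ≤ KK γ * (L * ‖x - x'‖ * R * R) := by
    refine yInt_bound hγ (by positivity) hR ?_ hZ hcl
    intro s hs t ht
    have := hA.corner x x' (Z s) (Z t)
    calc _ = ‖A (x - Z s) - A (x' - Z s) - A (x - Z t) + A (x' - Z t)‖ := by
          rw [sub_add]
      _ ≤ _ := this
      _ ≤ L * (‖x - x'‖ * (R * |s - t| ^ γ)) := by gcongr; exact hZ s hs t ht
      _ = _ := by ring
  refine (norm_add_le _ _).trans ((add_le_add h1 h0).trans (le_of_eq (by ring)))

lemma FF_bound (hA : ABd A L) (hγ : 1 / 2 < γ) (hR : 0 ≤ R) (hZ : HB γ R Z) (hcl : Z 0 = Z 1)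
    (ξ : ℝ) : ‖FF A Z ξ‖ ≤ KK γ * (L * R ^ 2) :=
  (yInt_bound hγ (mul_nonneg hA.nonneg hR) hR (hZ.kernel hA _) hZ hcl).trans
    (le_of_eq (by ring))

lemma FF_holder (hA : ABd A L) (hγ : 1 / 2 < γ) (hR : 0 ≤ R) (hZ : HB γ R Z) (hcl : Z 0 = Z 1) :
    HB γ (KK γ * (L * R ^ 3)) (FF A Z) := by
  intro s hs t ht
  refine (V_lip hA hγ hR hZ hcl (Z s) (Z t)).trans ?_
  have := (KK_pos hγ).le
  have := hA.nonneg
  calc _ ≤ KK γ * (L * R ^ 2) * (R * |s - t| ^ γ) := by gcongr; exact hZ s hs t ht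
    _ = _ := by ring

lemma FF_sub (hA : ABd A L) (hγ : 1 / 2 < γ) (hR : 0 ≤ R)
    (hZ : HB γ R Z) (hW : HB γ R W) (ξ : ℝ) :
    FF A Z ξ - FF A W ξ = yInt (fun η => A (Z ξ - Z η) - A (W ξ - W η)) Z
      + yInt (fun η => A (W ξ - W η)) (fun s => Z s - W s) :=
  yInt_sub hγ (mul_nonneg hA.nonneg hR) hR (mul_nonneg hA.nonneg hR) hR (hZ.kernel hA _) hZ
    (hW.kernel hA _) hW

lemma kernel_sub (hA : ABd A L) (hγ : 1 / 2 < γ) (hR : 0 ≤ R) (hD : 0 ≤ D)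
    (hZ : HB γ R Z) (hW : HB γ R W) (hd : HB γ D (fun s => Z s - W s))
    {ξ : ℝ} (hξ : ξ ∈ Icc (0:ℝ) 1) :
    HB γ (L * (R + 1) * D) (fun η => A (Z ξ - Z η) - A (W ξ - W η)) := by
  intro s hs t ht
  exact diff2 hA hR hD (by positivity) (hZ s hs t ht) (hW s hs t ht) (hd s hs t ht)
    (hd.le_one hγ hD hξ hs)

/-- Local Lipschitz bound for `Z ↦ V^Z ∘ Z` in the supremum norm. -/
lemma FF_lip_sup (hA : ABd A L) (hγ : 1 / 2 < γ) (hR : 0 ≤ R) (hD : 0 ≤ D)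
    (hZ : HB γ R Z) (hW : HB γ R W) (hd : HB γ D (fun s => Z s - W s))
    (hZc : Z 0 = Z 1) (hWc : W 0 = W 1) {ξ : ℝ} (hξ : ξ ∈ Icc (0:ℝ) 1) :
    ‖FF A Z ξ - FF A W ξ‖ ≤ KK γ * (L * (R ^ 2 + 2 * R)) * D := by
  have hL := hA.nonneg
  rw [FF_sub hA hγ hR hZ hW]
  have h1 := yInt_bound hγ (by positivity) hR (kernel_sub hA hγ hR hD hZ hW hd hξ) hZ hZc
  have h2 := yInt_bound hγ (mul_nonneg hL hR) hD (hW.kernel hA (W ξ)) hd (by simp [hZc, hWc])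
  exact (norm_add_le _ _).trans ((add_le_add h1 h2).trans (le_of_eq (by ring)))

/-- Local Lipschitz bound for `Z ↦ V^Z ∘ Z` in the Hölder seminorm. -/
lemma FF_lip_holder (hA : ABd A L) (hγ : 1 / 2 < γ) (hR : 0 ≤ R) (hD : 0 ≤ D)
    (hZ : HB γ R Z) (hW : HB γ R W) (hd : HB γ D (fun s => Z s - W s))
    (hZc : Z 0 = Z 1) (hWc : W 0 = W 1) :
    HB γ (KK γ * (L * (R ^ 3 + 3 * R ^ 2)) * D) (fun ξ => FF A Z ξ - FF A W ξ) := by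
  have hL := hA.nonneg
  intro ξ hξ ξ' hξ'
  have hLR := mul_nonneg hL hR
  have hLD : 0 ≤ L * (R + 1) * D := by positivity
  have hdc : (fun s => Z s - W s) 0 = (fun s => Z s - W s) 1 := by simp [hZc, hWc]
  simp only [FF_sub hA hγ hR hZ hW]
  set r := |ξ - ξ'| ^ γ with hr
  have hr0 : 0 ≤ r := by positivity
  rw [add_sub_add_comm,
    yInt_sub hγ hLD hR hLD hR (kernel_sub hA hγ hR hD hZ hW hd hξ) hZ
      (kernel_sub hA hγ hR hD hZ hW hd hξ') hZ,
    yInt_sub hγ hLR hD hLR hD (hW.kernel hA (W ξ)) hd (hW.kernel hA (W ξ')) hd]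
  have z1 : ‖yInt (fun η => A (Z ξ' - Z η) - A (W ξ' - W η)) (fun s => Z s - Z s)‖
      ≤ KK γ * (L * (R + 1) * D * 0) :=
    yInt_bound hγ hLD le_rfl (kernel_sub hA hγ hR hD hZ hW hd hξ') (fun s _ t _ => by simp)
      (by simp)
  have z2 : ‖yInt (fun η => A (W ξ' - W η)) (fun s => (Z s - W s) - (Z s - W s))‖
      ≤ KK γ * (L * R * 0) :=
    yInt_bound hγ hLR le_rfl (hW.kernel hA (W ξ')) (fun s _ t _ => by simp) (by simp)
  have z3 : ‖yInt (fun η => A (Z ξ - Z η) - A (W ξ - W η)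
      - (A (Z ξ' - Z η) - A (W ξ' - W η))) Z‖
      ≤ KK γ * (L * (R ^ 2 + 2 * R) * D * r * R) := by
    refine yInt_bound hγ (by positivity) hR ?_ hZ hZc
    intro s hs t ht
    exact diff3 hA hR hD hr0 (by positivity) (hZ s hs t ht) (hW s hs t ht) (hZ ξ hξ ξ' hξ')
      (hW ξ hξ ξ' hξ') (hd s hs t ht) (hd ξ hξ ξ' hξ') (hd.le_one hγ hD hξ hs)
  have z4 : ‖yInt (fun η => A (W ξ - W η) - A (W ξ' - W η)) (fun s => Z s - W s)‖
      ≤ KK γ * (L * R ^ 2 * r * D) := by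
    refine yInt_bound hγ (by positivity) hD ?_ hd hdc
    intro s hs t ht
    have := hA.corner (W ξ) (W ξ') (W s) (W t)
    calc _ = ‖A (W ξ - W s) - A (W ξ' - W s) - A (W ξ - W t) + A (W ξ' - W t)‖ := by
          rw [sub_add]
      _ ≤ _ := this
      _ ≤ L * ((R * r) * (R * |s - t| ^ γ)) := by
          gcongr
          · exact hW ξ hξ ξ' hξ'
          · exact hW s hs t ht
      _ = _ := by ring
  refine (norm_add_le _ _).trans ((add_le_add ((norm_add_le _ _).trans (add_le_add z3 z1))
    ((norm_add_le _ _).trans (add_le_add z4 z2))).trans (le_of_eq (by ring)))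

end

/-! ### The Banach space of closed Hölder curves -/

/-- Index set for the values and the Hölder quotients of a curve on `[0,1]`. -/
abbrev HIdx : Type := Icc (0:ℝ) 1 ⊕ (Icc (0:ℝ) 1 × Icc (0:ℝ) 1)

/-- The Banach space of bounded families indexed by `HIdx`. -/
abbrev HAmb : Type := lp (fun _ : HIdx => E3) ∞

/-- The space `𝒞^γ`, realized as a subspace of `ℓ^∞`: a curve is identified with the family of its
values and of its Hölder quotients, so that the norm is `max (‖u‖_∞, ‖u‖_γ)`. -/
def HC (γ : ℝ) : Submodule ℝ HAmb where
  carrier := {u | (∀ s t : Icc (0:ℝ) 1, u (Sum.inr (s, t))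
      = (|s.1 - t.1| ^ γ)⁻¹ • (u (Sum.inl s) - u (Sum.inl t)))
    ∧ u (Sum.inl 0) = u (Sum.inl 1)}
  add_mem' {u v} hu hv := by
    refine ⟨fun s t => ?_, ?_⟩
    · simp only [lp.coeFn_add, Pi.add_apply, hu.1, hv.1]; module
    · simp only [lp.coeFn_add, Pi.add_apply, hu.2, hv.2]
  zero_mem' := by simp
  smul_mem' c u hu := by
    refine ⟨fun s t => ?_, ?_⟩
    · simp only [lp.coeFn_smul, Pi.smul_apply, hu.1]; module
    · simp only [lp.coeFn_smul, Pi.smul_apply, hu.2]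

lemma HAmb.continuous_apply (i : HIdx) : Continuous (fun u : HAmb => u i) := by
  refine (LipschitzWith.of_dist_le_mul (K := 1) fun u v => ?_).continuous
  rw [dist_eq_norm, dist_eq_norm, NNReal.coe_one, one_mul]
  exact lp.norm_apply_le_norm ENNReal.top_ne_zero (u - v) i

instance (γ : ℝ) : CompleteSpace (HC γ) := by
  have hc : IsClosed ((HC γ : Submodule ℝ HAmb) : Set HAmb) := by
    have : ((HC γ : Submodule ℝ HAmb) : Set HAmb) =
        (⋂ s : Icc (0:ℝ) 1, ⋂ t : Icc (0:ℝ) 1, {u : HAmb | u (Sum.inr (s, t))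
          = (|s.1 - t.1| ^ γ)⁻¹ • (u (Sum.inl s) - u (Sum.inl t))}) ∩
        {u : HAmb | u (Sum.inl 0) = u (Sum.inl 1)} := by
      ext u
      simp only [mem_inter_iff, mem_iInter, mem_ofPred_eq]
      exact Iff.rfl
    rw [this]
    refine (isClosed_iInter fun s => isClosed_iInter fun t => ?_).inter ?_
    · let f : HIdx → HAmb → E3 := fun i u => u i
      have hf : ∀ i, Continuous (f i) := HAmb.continuous_apply
      have h3 : Continuous (fun u => (|s.1 - t.1| ^ γ)⁻¹ • (f (Sum.inl s) u - f (Sum.inl t) u)) :=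
        ((hf (Sum.inl s)).sub (hf (Sum.inl t))).const_smul (|s.1 - t.1| ^ γ)⁻¹
      exact isClosed_eq (hf (Sum.inr (s, t))) h3
    · exact isClosed_eq (HAmb.continuous_apply _) (HAmb.continuous_apply _)
  exact hc.completeSpace_coe

namespace HC

variable {γ : ℝ}

/-- The curve represented by an element of `HC γ`, extended by constants outside `[0,1]`. -/
def ev (u : HC γ) (s : ℝ) : E3 := u.1 (Sum.inl (projIcc 0 1 zero_le_one s))

lemma ev_sub (u v : HC γ) (s : ℝ) : ev (u - v) s = ev u s - ev v s := rfl

lemma ev_coe (u : HC γ) (s : Icc (0:ℝ) 1) : u.1 (Sum.inl s) = ev u s := by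
  simp [ev]

lemma norm_ev_le (u : HC γ) (s : ℝ) : ‖ev u s‖ ≤ ‖u‖ :=
  lp.norm_apply_le_norm ENNReal.top_ne_zero u.1 _

/-- Evaluation at a parameter, as a continuous linear map. -/
def evL (γ s : ℝ) : HC γ →L[ℝ] E3 :=
  LinearMap.mkContinuous
    { toFun := fun u => ev u s, map_add' := fun _ _ => rfl, map_smul' := fun _ _ => rfl } 1
    (fun u => by rw [one_mul]; exact norm_ev_le u s)

@[simp] lemma evL_apply (s : ℝ) (u : HC γ) : evL γ s u = ev u s := rfl

lemma ev_closed (u : HC γ) : ev u 0 = ev u 1 := by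
  have h := u.2.2
  rw [ev_coe, ev_coe] at h
  exact h

lemma rpow_pos {s t : ℝ} (h : s ≠ t) (γ : ℝ) : 0 < |s - t| ^ γ :=
  Real.rpow_pos_of_pos (abs_pos.2 (sub_ne_zero.2 h)) _

lemma hb_ev (u : HC γ) : HB γ ‖u‖ (ev u) := by
  intro s hs t ht
  by_cases hst : s = t
  · subst hst; simp; positivity
  have h := lp.norm_apply_le_norm ENNReal.top_ne_zero u.1 (Sum.inr (⟨s, hs⟩, ⟨t, ht⟩))
  rw [u.2.1, ev_coe, ev_coe, norm_smul, norm_inv, Real.norm_of_nonneg (rpow_pos hst γ).le,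
    inv_mul_le_iff₀ (rpow_pos hst γ)] at h
  rw [mul_comm]; exact h

lemma norm_le {u : HC γ} {C : ℝ} (hC : 0 ≤ C) (h1 : ∀ s ∈ Icc (0:ℝ) 1, ‖ev u s‖ ≤ C)
    (h2 : HB γ C (ev u)) : ‖u‖ ≤ C := by
  refine lp.norm_le_of_forall_le (f := u.1) hC ?_
  rintro (s | ⟨s, t⟩)
  · rw [ev_coe]; exact h1 s s.2
  · rw [u.2.1, ev_coe, ev_coe]
    by_cases hst : s = t
    · subst hst; simpa using hC
    have hst' : s.1 ≠ t.1 := fun h => hst (Subtype.ext h)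
    rw [norm_smul, norm_inv, Real.norm_of_nonneg (rpow_pos hst' γ).le,
      inv_mul_le_iff₀ (rpow_pos hst' γ), mul_comm]
    exact h2 s s.2 t t.2

lemma ext_ev {u v : HC γ} (h : ∀ s ∈ Icc (0:ℝ) 1, ev u s = ev v s) : u = v := by
  rw [← sub_eq_zero, ← norm_le_zero_iff]
  refine norm_le le_rfl (fun s hs => ?_) fun s hs t ht => ?_
  · rw [ev_sub, h s hs]; simp
  · rw [ev_sub, ev_sub, h s hs, h t ht]; simp

/-- A closed `γ`-Hölder curve as an element of `HC γ`. -/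
def mk (f : ℝ → E3) (hc : f 0 = f 1) (C : ℝ) (hb : ∀ s ∈ Icc (0:ℝ) 1, ‖f s‖ ≤ C)
    (hf : HB γ C f) : HC γ :=
  ⟨⟨fun i => Sum.elim (fun s : Icc (0:ℝ) 1 => f s)
      (fun p => (|p.1.1 - p.2.1| ^ γ)⁻¹ • (f p.1 - f p.2)) i, by
    refine memℓp_infty ⟨C, ?_⟩
    rintro _ ⟨i, rfl⟩
    have hC : 0 ≤ C := (norm_nonneg _).trans (hb 0 (by simp))
    rcases i with s | ⟨s, t⟩
    · exact hb s s.2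
    · by_cases hst : s = t
      · subst hst; simpa using hC
      have hst' : s.1 ≠ t.1 := fun h => hst (Subtype.ext h)
      simp only [Sum.elim_inr]
      rw [norm_smul, norm_inv, Real.norm_of_nonneg (rpow_pos hst' γ).le,
        inv_mul_le_iff₀ (rpow_pos hst' γ), mul_comm]
      exact hf s s.2 t t.2⟩,
  ⟨fun _ _ => rfl, hc⟩⟩

lemma ev_mk {f : ℝ → E3} {hc : f 0 = f 1} {C : ℝ} {hb : ∀ s ∈ Icc (0:ℝ) 1, ‖f s‖ ≤ C}
    {hf : HB γ C f} {s : ℝ} (hs : s ∈ Icc (0:ℝ) 1) : ev (mk f hc C hb hf) s = f s := by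
  change f (projIcc 0 1 zero_le_one s) = f s
  rw [projIcc_of_mem _ hs]

end HC

/-! ### Hölder seminorms -/

section

variable {γ : ℝ} {X Z : ℝ → E3}

lemma HB.hSemi_le {C : ℝ} (hC : 0 ≤ C) (h : HB γ C X) : hSemi γ X ≤ C := by
  refine Real.sSup_le ?_ hC
  rintro _ ⟨s, hs, t, ht, hst, rfl⟩
  rw [div_le_iff₀ (HC.rpow_pos hst γ)]
  exact h s hs t ht

lemma HB.hSemi {C : ℝ} (h : HB γ C X) : HB γ (hSemi γ X) X := by
  intro s hs t ht
  by_cases hst : s = t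
  · subst hst
    simp only [sub_self, norm_zero]
    refine mul_nonneg (Real.sSup_nonneg ?_) (by positivity)
    rintro _ ⟨s, hs, t, ht, hst, rfl⟩
    positivity
  rw [← div_le_iff₀ (HC.rpow_pos hst γ)]
  refine le_csSup ⟨C, ?_⟩ ⟨s, hs, t, ht, hst, rfl⟩
  rintro _ ⟨s, hs, t, ht, hst, rfl⟩
  rw [div_le_iff₀ (HC.rpow_pos hst γ)]
  exact h s hs t ht

lemma hSemi_nonneg (γ : ℝ) (X : ℝ → E3) : 0 ≤ hSemi γ X := by
  refine Real.sSup_nonneg ?_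
  rintro _ ⟨s, hs, t, ht, hst, rfl⟩
  positivity

lemma sNorm_nonneg (X : ℝ → E3) : 0 ≤ sNorm X := by
  refine Real.sSup_nonneg ?_
  rintro _ ⟨s, hs, rfl⟩
  positivity

lemma sNorm_le {C : ℝ} (hC : 0 ≤ C) (h : ∀ s ∈ Icc (0:ℝ) 1, ‖X s‖ ≤ C) : sNorm X ≤ C := by
  refine Real.sSup_le ?_ hC
  rintro _ ⟨s, hs, rfl⟩
  exact h s hs

lemma le_sNorm {C : ℝ} (h : ∀ s ∈ Icc (0:ℝ) 1, ‖X s‖ ≤ C) {s : ℝ} (hs : s ∈ Icc (0:ℝ) 1) :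
    ‖X s‖ ≤ sNorm X := by
  refine le_csSup ⟨C, ?_⟩ ⟨s, hs, rfl⟩
  rintro _ ⟨s, hs, rfl⟩
  exact h s hs

lemma HB.congr {C : ℝ} (h : HB γ C X) (he : ∀ s ∈ Icc (0:ℝ) 1, X s = Z s) : HB γ C Z :=
  fun s hs t ht => by rw [← he s hs, ← he t ht]; exact h s hs t ht

lemma hSemi_congr (he : ∀ s ∈ Icc (0:ℝ) 1, X s = Z s) : hSemi γ X = hSemi γ Z := by
  unfold _root_.hSemi
  congr 1
  ext r
  constructor
  · rintro ⟨s, hs, t, ht, hst, rfl⟩; exact ⟨s, hs, t, ht, hst, by rw [he s hs, he t ht]⟩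
  · rintro ⟨s, hs, t, ht, hst, rfl⟩; exact ⟨s, hs, t, ht, hst, by rw [he s hs, he t ht]⟩

lemma sNorm_congr (he : ∀ s ∈ Icc (0:ℝ) 1, X s = Z s) : sNorm X = sNorm Z := by
  unfold sNorm
  congr 1
  ext r
  constructor
  · rintro ⟨s, hs, rfl⟩; exact ⟨s, hs, by rw [he s hs]⟩
  · rintro ⟨s, hs, rfl⟩; exact ⟨s, hs, by rw [he s hs]⟩

lemma HB.mono_exp {γ' C : ℝ} (hC : 0 ≤ C) (h : HB γ' C X) (hγ : γ ≤ γ') :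
    HB γ C X := by
  intro s hs t ht
  by_cases hst : s = t
  · subst hst; simp; positivity
  refine (h s hs t ht).trans (mul_le_mul_of_nonneg_left ?_ hC)
  refine Real.rpow_le_rpow_of_exponent_ge (abs_pos.2 (sub_ne_zero.2 hst)) ?_ hγ
  rw [abs_le]; constructor <;> linarith [hs.1, hs.2, ht.1, ht.2]

lemma HB.continuousOn {C : ℝ} (h : HB γ C X) (h0 : 0 < γ) : ContinuousOn X (Icc (0:ℝ) 1) := by
  intro t ht
  rw [ContinuousWithinAt, tendsto_iff_norm_sub_tendsto_zero]
  have hlim : Tendsto (fun s : ℝ => C * |s - t| ^ γ) (𝓝[Icc 0 1] t) (𝓝 0) := by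
    have hcont : Continuous (fun s : ℝ => C * |s - t| ^ γ) :=
      continuous_const.mul ((continuous_id.sub continuous_const).abs.rpow_const
        (fun _ => Or.inr h0.le))
    have := (hcont.tendsto t).mono_left (nhdsWithin_le_nhds (s := Icc (0:ℝ) 1))
    simpa [Real.zero_rpow h0.ne'] using this
  refine squeeze_zero' (Eventually.of_forall fun _ => norm_nonneg _) ?_ hlim
  filter_upwards [self_mem_nhdsWithin] with s hs using h s hs t ht

end

namespace HC

variable {γ : ℝ}

lemma memC (hγ : 0 < γ) (u : HC γ) : MemC γ (ev u) :=
  ⟨⟨(hb_ev u).continuousOn hγ, ev_closed u⟩, ‖u‖, hb_ev u⟩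

lemma exists_of_memC (hγ : 0 ≤ γ) {f : ℝ → E3} (hf : MemC γ f) :
    ∃ u : HC γ, ∀ s ∈ Icc (0:ℝ) 1, ev u s = f s := by
  obtain ⟨⟨-, hc⟩, C, hC⟩ := hf
  have hb : ∀ s ∈ Icc (0:ℝ) 1, ‖f s‖ ≤ ‖f 0‖ + |C| := by
    intro s hs
    have h := hC s hs 0 (by simp)
    have h1 : |s - 0| ^ γ ≤ 1 := by
      refine Real.rpow_le_one (abs_nonneg _) ?_ hγ
      rw [abs_le]; constructor <;> linarith [hs.1, hs.2]
    have h2 : C * |s - 0| ^ γ ≤ |C| := by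
      refine (mul_le_mul_of_nonneg_right (le_abs_self C) (by positivity)).trans ?_
      exact mul_le_of_le_one_right (abs_nonneg _) h1
    have := norm_sub_norm_le (f s) (f 0)
    linarith
  refine ⟨mk f hc (‖f 0‖ + |C|) hb fun s hs t ht => (hC s hs t ht).trans ?_, fun s hs => ev_mk hs⟩
  gcongr
  linarith [le_abs_self C, norm_nonneg (f 0)]

/-- The Hölder seminorm, as a function on `HC γ`. -/
def semi (u : HC γ) : ℝ := hSemi γ (ev u)

lemma hb_semi (u : HC γ) : HB γ (semi u) (ev u) := (hb_ev u).hSemi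

lemma semi_nonneg (u : HC γ) : 0 ≤ semi u := hSemi_nonneg _ _

lemma semi_le_norm (u : HC γ) : semi u ≤ ‖u‖ := (hb_ev u).hSemi_le (norm_nonneg _)

lemma semi_le_add (u v : HC γ) : semi u ≤ semi v + ‖u - v‖ := by
  refine HB.hSemi_le (add_nonneg (semi_nonneg _) (norm_nonneg _)) fun s hs t ht => ?_
  have h1 := hb_semi v s hs t ht
  have h2 := hb_ev (u - v) s hs t ht
  rw [ev_sub, ev_sub] at h2
  have : ev u s - ev u t = (ev v s - ev v t) + (ev u s - ev v s - (ev u t - ev v t)) := by abel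
  rw [this, add_mul]
  exact (norm_add_le _ _).trans (add_le_add h1 h2)

lemma norm_le_hStar (u : HC γ) : ‖u‖ ≤ hStar γ (ev u) := by
  have h1 := sNorm_nonneg (ev u)
  have h2 := hSemi_nonneg γ (ev u)
  refine norm_le (add_nonneg h1 h2) (fun s hs => ?_) fun s hs t ht => ?_
  · exact (le_sNorm (fun s _ => norm_ev_le u s) hs).trans (le_add_of_nonneg_right h2)
  · refine (hb_semi u s hs t ht).trans ?_
    exact mul_le_mul_of_nonneg_right (le_add_of_nonneg_left h1) (by positivity)

lemma hStar_le_norm (u : HC γ) : hStar γ (ev u) ≤ 2 * ‖u‖ := by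
  have := sNorm_le (norm_nonneg u) (fun s _ => norm_ev_le u s)
  have := semi_le_norm u
  unfold hStar; unfold semi at this; linarith

end HC

/-! ### The vector field on the space of curves -/

section

variable {A : E3 → M3} {L γ : ℝ}

lemma exists_field (hA : ABd A L) (hγ : 1 / 2 < γ) (u : HC γ) :
    ∃ w : HC γ, ∀ s ∈ Icc (0:ℝ) 1, HC.ev w s = FF A (HC.ev u) s := by
  refine HC.exists_of_memC (by linarith) ⟨⟨?_, ?_⟩, ?_⟩
  · exact (FF_holder hA hγ (norm_nonneg _) (HC.hb_ev u) (HC.ev_closed u)).continuousOn (by linarith)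
  · unfold FF; rw [HC.ev_closed]
  · exact ⟨_, FF_holder hA hγ (norm_nonneg _) (HC.hb_ev u) (HC.ev_closed u)⟩

/-- The vector field `u ↦ V^u ∘ u` on `HC γ`. -/
def field (hA : ABd A L) (hγ : 1 / 2 < γ) (u : HC γ) : HC γ := (exists_field hA hγ u).choose

lemma ev_field (hA : ABd A L) (hγ : 1 / 2 < γ) (u : HC γ) :
    ∀ s ∈ Icc (0:ℝ) 1, HC.ev (field hA hγ u) s = FF A (HC.ev u) s :=
  (exists_field hA hγ u).choose_spec

lemma HB.mono_const {C C' : ℝ} {f : ℝ → E3} (h : HB γ C f) (hC : C ≤ C') : HB γ C' f :=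
  fun s hs t ht => (h s hs t ht).trans (mul_le_mul_of_nonneg_right hC (by positivity))

lemma field_bound (hA : ABd A L) (hγ : 1 / 2 < γ) (R : ℝ) :
    ∃ M : ℝ, 0 ≤ M ∧ ∀ u : HC γ, HC.semi u ≤ R → ‖field hA hγ u‖ ≤ M := by
  have hL := hA.nonneg
  have hK := (KK_pos hγ).le
  have hR : 0 ≤ max R 0 := le_max_right _ _
  refine ⟨KK γ * (L * max R 0 ^ 2) + KK γ * (L * max R 0 ^ 3), by positivity, fun u hu => ?_⟩
  have hb : HB γ (max R 0) (HC.ev u) := (HC.hb_semi u).mono_const (hu.trans (le_max_left _ _))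
  refine HC.norm_le (by positivity) (fun s hs => ?_) ?_
  · rw [ev_field hA hγ u s hs]
    exact (FF_bound hA hγ hR hb (HC.ev_closed u) s).trans (le_add_of_nonneg_right (by positivity))
  · refine ((FF_holder hA hγ hR hb (HC.ev_closed u)).congr
      (fun s hs => (ev_field hA hγ u s hs).symm)).mono_const ?_
    exact le_add_of_nonneg_left (by positivity)

lemma field_lip (hA : ABd A L) (hγ : 1 / 2 < γ) (R : ℝ) :
    ∃ K : ℝ, 0 ≤ K ∧ ∀ u v : HC γ, HC.semi u ≤ R → HC.semi v ≤ R →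
      ‖field hA hγ u - field hA hγ v‖ ≤ K * ‖u - v‖ := by
  have hL := hA.nonneg
  have hK := (KK_pos hγ).le
  have hR : 0 ≤ max R 0 := le_max_right _ _
  set r := max R 0
  refine ⟨KK γ * (L * (r ^ 2 + 2 * r)) + KK γ * (L * (r ^ 3 + 3 * r ^ 2)), by positivity,
    fun u v hu hv => ?_⟩
  have hbu : HB γ r (HC.ev u) := (HC.hb_semi u).mono_const (hu.trans (le_max_left _ _))
  have hbv : HB γ r (HC.ev v) := (HC.hb_semi v).mono_const (hv.trans (le_max_left _ _))
  have hd : HB γ ‖u - v‖ (fun s => HC.ev u s - HC.ev v s) := HC.hb_ev (u - v)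
  rw [add_mul]
  refine HC.norm_le (by positivity) (fun s hs => ?_) ?_
  · rw [HC.ev_sub, ev_field hA hγ u s hs, ev_field hA hγ v s hs]
    exact (FF_lip_sup hA hγ hR (norm_nonneg _) hbu hbv hd (HC.ev_closed u) (HC.ev_closed v)
      hs).trans (le_add_of_nonneg_right (by positivity))
  · refine ((FF_lip_holder hA hγ hR (norm_nonneg _) hbu hbv hd (HC.ev_closed u)
      (HC.ev_closed v)).congr (fun s hs => ?_)).mono_const (le_add_of_nonneg_left (by positivity))
    rw [HC.ev_sub, ev_field hA hγ u s hs, ev_field hA hγ v s hs]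

end

/-! ### Autonomous equations with a controlling functional -/

/-- The hypotheses under which an autonomous equation `x' = F x` has a maximal solution that can
only stop by blow-up of the functional `p`: the field `F` is bounded and Lipschitz on the sublevel
sets of the `1`-Lipschitz functional `p`. -/
structure Controlled {E : Type*} [NormedAddCommGroup E] (F : E → E) (p : E → ℝ) : Prop where
  lip : ∀ x y, p x ≤ p y + ‖x - y‖
  bound : ∀ R : ℝ, ∃ M : ℝ, 0 ≤ M ∧ ∀ x, p x ≤ R → ‖F x‖ ≤ M
  field_lip : ∀ R : ℝ, ∃ K : ℝ, 0 ≤ K ∧ ∀ x y, p x ≤ R → p y ≤ R → ‖F x - F y‖ ≤ K * ‖x - y‖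

/-- `α` solves `x' = F x` on `[a,b]`. Only right derivatives are required, which makes
concatenation of solutions immediate. -/
structure Sol {E : Type*} [NormedAddCommGroup E] [NormedSpace ℝ E] (F : E → E) (a b : ℝ)
    (α : ℝ → E) : Prop where
  cont : ContinuousOn α (Icc a b)
  deriv : ∀ t ∈ Ico a b, HasDerivWithinAt α (F (α t)) (Ici t) t

section

variable {E : Type*} [NormedAddCommGroup E] [NormedSpace ℝ E] {F : E → E} {p : E → ℝ}
  {a b c : ℝ} {α β : ℝ → E}

lemma Sol.mono (h : Sol F a b α) {a' b' : ℝ} (ha : a ≤ a') (hb : b' ≤ b) : Sol F a' b' α :=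
  ⟨h.cont.mono (Icc_subset_Icc ha hb), fun t ht => h.deriv t ⟨ha.trans ht.1, ht.2.trans_le hb⟩⟩

lemma Sol.congr (h : Sol F a b α) (he : EqOn β α (Icc a b)) : Sol F a b β := by
  refine ⟨h.cont.congr he, fun t ht => ?_⟩
  have ht' : t ∈ Icc a b := Ico_subset_Icc_self ht
  rw [he ht']
  refine (h.deriv t ht).congr_of_eventuallyEq ?_ (he ht')
  have : Icc t b ∈ 𝓝[≥] t := Icc_mem_nhdsGE ht.2
  filter_upwards [this] with s hs using he ⟨ht.1.trans hs.1, hs.2⟩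

lemma Sol.glue (hα : Sol F a b α) (hβ : Sol F b c β) (hab : a ≤ b) (hbc : b ≤ c)
    (he : α b = β b) : ∃ δ, EqOn δ α (Icc a b) ∧ EqOn δ β (Icc b c) ∧ Sol F a c δ := by
  have e1 : EqOn (fun t => if t ≤ b then α t else β t) α (Icc a b) := fun t ht => if_pos ht.2
  have e2 : EqOn (fun t => if t ≤ b then α t else β t) β (Icc b c) := by
    intro t ht
    by_cases h : t ≤ b
    · have : t = b := le_antisymm h ht.1
      subst this; simp [he]
    · simp [h]
  have s1 := hα.congr e1
  have s2 := hβ.congr e2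
  refine ⟨_, e1, e2, ?_, fun t ht => ?_⟩
  · rw [← Icc_union_Icc_eq_Icc hab hbc]
    exact s1.cont.union_of_isClosed s2.cont isClosed_Icc isClosed_Icc
  · rcases lt_or_ge t b with h | h
    · exact s1.deriv t ⟨ht.1, h⟩
    · exact s2.deriv t ⟨h, ht.2⟩

lemma Sol.bdd (h : Sol F a b α) (hp : ∀ x y, p x ≤ p y + ‖x - y‖) :
    ∃ R, ∀ t ∈ Icc a b, p (α t) ≤ R := by
  obtain ⟨C, hC⟩ := isCompact_Icc.exists_bound_of_continuousOn h.cont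
  refine ⟨p 0 + C, fun t ht => (hp _ 0).trans ?_⟩
  rw [sub_zero]
  linarith [hC t ht]

lemma Sol.unique (hF : Controlled F p) (hα : Sol F a b α) (hβ : Sol F a b β) (he : α a = β a) :
    EqOn α β (Icc a b) := by
  obtain ⟨R1, h1⟩ := hα.bdd hF.lip
  obtain ⟨R2, h2⟩ := hβ.bdd hF.lip
  obtain ⟨K, hK, hl⟩ := hF.field_lip (max R1 R2)
  have hz := eq_zero_of_abs_deriv_le_mul_abs_self_of_eq_zero_right (f := fun t => α t - β t)
    (K := K) (hα.cont.sub hβ.cont) (fun t ht => (hα.deriv t ht).sub (hβ.deriv t ht))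
    (sub_eq_zero.2 he)
    (fun t ht => hl _ _ ((h1 t (Ico_subset_Icc_self ht)).trans (le_max_left _ _))
      ((h2 t (Ico_subset_Icc_self ht)).trans (le_max_right _ _)))
  exact fun t ht => sub_eq_zero.1 (hz t ht)

open Metric in
/-- Local existence, on a time interval that depends only on the size of `p` at the initial
point. -/
lemma Controlled.exists_local [CompleteSpace E] (hF : Controlled F p) (R : ℝ) :
    ∃ τ > 0, ∀ (x₀ : E) (a : ℝ), p x₀ ≤ R →
      ∃ α : ℝ → E, α a = x₀ ∧ Sol F a (a + τ) α ∧ ∀ t ∈ Icc a (a + τ), p (α t) ≤ R + 1 := by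
  obtain ⟨M, hM, hb⟩ := hF.bound (R + 1)
  obtain ⟨K, hK, hl⟩ := hF.field_lip (R + 1)
  lift M to NNReal using hM
  lift K to NNReal using hK
  refine ⟨((M : ℝ) + 1)⁻¹, by positivity, fun x₀ a hx₀ => ?_⟩
  have hball : ∀ x ∈ closedBall x₀ (1 : NNReal), p x ≤ R + 1 := by
    intro x hx
    rw [mem_closedBall, dist_eq_norm, NNReal.coe_one] at hx
    linarith [hF.lip x x₀]
  have hle : a ≤ a + ((M : ℝ) + 1)⁻¹ := by linarith [inv_nonneg.2 (show 0 ≤ (M : ℝ) + 1 by positivity)]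
  have hPL : IsPicardLindelof (fun _ => F) (⟨a, left_mem_Icc.2 hle⟩ : Icc a (a + ((M : ℝ) + 1)⁻¹)) x₀
      1 0 M K := by
    refine IsPicardLindelof.of_time_independent (fun x hx => hb x (hball x hx)) ?_ ?_
    · refine LipschitzOnWith.of_dist_le_mul fun x hx y hy => ?_
      rw [dist_eq_norm, dist_eq_norm]
      exact hl x y (hball x hx) (hball y hy)
    · have : (M : ℝ) * ((M : ℝ) + 1)⁻¹ ≤ 1 := by
        rw [← div_eq_mul_inv, div_le_one (by positivity)]; linarith
      simpa [max_eq_left (show (0:ℝ) ≤ ((M : ℝ) + 1)⁻¹ by positivity)] using this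
  obtain ⟨α, hα⟩ := ODE.FunSpace.exists_isFixedPt_next hPL (mem_closedBall_self le_rfl)
  have hmem : ∀ t, α.compProj t ∈ closedBall x₀ (1 : NNReal) :=
    fun t => α.compProj_mem_closedBall hPL.mul_max_le
  have hd : ∀ t ∈ Icc a (a + ((M : ℝ) + 1)⁻¹),
      HasDerivWithinAt α.compProj (F (α.compProj t)) (Icc a (a + ((M : ℝ) + 1)⁻¹)) t := by
    intro t ht
    apply ODE.hasDerivWithinAt_picard_Icc (left_mem_Icc.2 hle) hPL.continuousOn_uncurry
      α.continuous_compProj.continuousOn (fun t' _ ↦ hmem t') x₀ ht |>.congr_of_mem _ ht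
    intro t' ht'
    nth_rw 1 [← hα]
    rw [ODE.FunSpace.compProj_of_mem ht', ODE.FunSpace.next_apply]
  refine ⟨α.compProj, ?_, ⟨α.continuous_compProj.continuousOn, fun t ht => ?_⟩,
    fun t _ => hball _ (hmem t)⟩
  · rw [ODE.FunSpace.compProj_of_mem (left_mem_Icc.2 hle), ← hα, ODE.FunSpace.next_apply₀]
  · exact (hd t (Ico_subset_Icc_self ht)).mono_of_mem_nhdsWithin (Icc_mem_nhdsGE_of_mem ht)

/-- Maximal solutions, with blow-up of `p` at the end of a finite life time. -/
theorem Controlled.exists_maximal [CompleteSpace E] (hF : Controlled F p) (x₀ : E) :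
    ∃ (That : ℝ≥0∞) (Y : ℝ → E), 0 < That ∧ Y 0 = x₀ ∧
      (∀ T, ENNReal.ofReal T < That → Sol F 0 T Y) ∧
      (That ≠ ⊤ → Tendsto (fun t => p (Y t)) (𝓝[<] That.toReal) atTop) := by
  classical
  let Q : ℝ → Prop := fun T => ∃ α : ℝ → E, α 0 = x₀ ∧ Sol F 0 T α
  let That : ℝ≥0∞ := ⨆ T : {T : ℝ // Q T}, ENNReal.ofReal T
  let Y : ℝ → E := fun t => if h : Q t then h.choose t else x₀
  have hY : ∀ T (α : ℝ → E), α 0 = x₀ → Sol F 0 T α → EqOn Y α (Icc 0 T) := by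
    intro T α h0 hα t ht
    have hQ : Q t := ⟨α, h0, hα.mono le_rfl ht.2⟩
    have : Y t = hQ.choose t := dif_pos hQ
    rw [this]
    exact hQ.choose_spec.2.unique hF (hα.mono le_rfl ht.2) (hQ.choose_spec.1.trans h0.symm)
      (right_mem_Icc.2 ht.1)
  have hle : ∀ T, Q T → ENNReal.ofReal T ≤ That := fun T hT =>
    le_iSup (fun T : {T : ℝ // Q T} => ENNReal.ofReal T) ⟨T, hT⟩
  have hsol : ∀ T, ENNReal.ofReal T < That → Sol F 0 T Y := by
    intro T hT
    obtain ⟨⟨T', α, h0, hα⟩, hT'⟩ := lt_iSup_iff.1 hT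
    have hlt : T < T' := (ENNReal.ofReal_lt_ofReal_iff'.1 hT').1
    exact (hα.congr (hY T' α h0 hα)).mono le_rfl hlt.le
  have hpos : 0 < That := by
    obtain ⟨τ, hτ, h⟩ := hF.exists_local (p x₀)
    obtain ⟨α, h0, hα, -⟩ := h x₀ 0 le_rfl
    exact (ENNReal.ofReal_pos.2 (by linarith)).trans_le (hle (0 + τ) ⟨α, h0, hα⟩)
  have hY0 : Y 0 = x₀ := by
    obtain ⟨τ, hτ, h⟩ := hF.exists_local (p x₀)
    obtain ⟨α, h0, hα, -⟩ := h x₀ 0 le_rfl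
    rw [hY _ α h0 hα (left_mem_Icc.2 (by linarith)), h0]
  refine ⟨That, Y, hpos, hY0, hsol, fun hfin => ?_⟩
  by_contra hnot
  have hT : 0 < That.toReal := ENNReal.toReal_pos hpos.ne' hfin
  rw [tendsto_atTop] at hnot
  push Not at hnot
  obtain ⟨R, hR⟩ := hnot
  obtain ⟨τ, hτ, hloc⟩ := hF.exists_local R
  have hev : ∀ᶠ t in 𝓝[<] That.toReal, t ∈ Ioo (max 0 (That.toReal - τ)) That.toReal :=
    Ioo_mem_nhdsLT (max_lt hT (by linarith))
  obtain ⟨t, ht, htm⟩ := (hR.and_eventually hev).exists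
  have ht0 : 0 < t := (le_max_left _ _).trans_lt htm.1
  have htτ : That.toReal < t + τ := by linarith [(le_max_right _ _).trans_lt htm.1]
  have hlt : ENNReal.ofReal t < That := by
    rw [← ENNReal.ofReal_toReal hfin]
    exact (ENNReal.ofReal_lt_ofReal_iff hT).2 htm.2
  obtain ⟨α, h0, hα, -⟩ := hloc (Y t) t ht.le
  obtain ⟨δ, hδ, -, hs⟩ := (hsol t hlt).glue hα ht0.le (by linarith) h0.symm
  have hfinal := hle (t + τ) ⟨δ, (hδ (left_mem_Icc.2 ht0.le)).trans hY0, hs⟩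
  rw [← ENNReal.ofReal_toReal hfin, ENNReal.ofReal_le_ofReal_iff hT.le] at hfinal
  linarith

end

lemma Controlled.continuousOn_comp {E : Type*} [NormedAddCommGroup E] {F : E → E} {p : E → ℝ}
    {a b : ℝ} {α : ℝ → E} (hF : Controlled F p) (h : ContinuousOn α (Icc a b)) :
    ContinuousOn (fun t => F (α t)) (Icc a b) := by
  obtain ⟨C, hC⟩ := isCompact_Icc.exists_bound_of_continuousOn h
  have hp : ∀ t ∈ Icc a b, p (α t) ≤ p 0 + C := fun t ht => by
    have := hF.lip (α t) 0
    rw [sub_zero] at this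
    linarith [hC t ht]
  obtain ⟨K, hK, hl⟩ := hF.field_lip (p 0 + C)
  have hL : LipschitzOnWith ⟨K, hK⟩ F (Set.image α (Icc a b)) := by
    refine LipschitzOnWith.of_dist_le_mul ?_
    rintro _ ⟨s, hs, rfl⟩ _ ⟨t, ht, rfl⟩
    rw [dist_eq_norm, dist_eq_norm]
    exact hl _ _ (hp s hs) (hp t ht)
  exact hL.continuousOn.comp h (mapsTo_image _ _)

/-! ### Solutions of the filament equation as integral curves -/

section

variable {A : E3 → M3} {L γ : ℝ} {X : ℝ → E3}

lemma controlled_field (hA : ABd A L) (hγ : 1 / 2 < γ) :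
    Controlled (field hA hγ) (HC.semi (γ := γ)) :=
  ⟨HC.semi_le_add, field_bound hA hγ, field_lip hA hγ⟩

lemma youngRS_congr {Z Z' : ℝ → E3} (h : ∀ s ∈ Icc (0:ℝ) 1, Z s = Z' s) (x : E3) (P : Ptn 0 1) :
    youngRS A Z x P = youngRS A Z' x P := by
  unfold youngRS
  refine Finset.sum_congr rfl fun i hi => ?_
  have hi' : i < P.n := Finset.mem_range.1 hi
  rw [h _ (P.mem hi'.le), h _ (P.mem hi')]

lemma HB.isYoungVelocity (hA : ABd A L) (hγ : 1 / 2 < γ) {R : ℝ} (hR : 0 ≤ R) {Z : ℝ → E3}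
    (hZ : HB γ R Z) : IsYoungVelocity A Z (fun x => yInt (fun η => A (x - Z η)) Z) := by
  intro x
  have h := yInt_spec hγ (mul_nonneg hA.nonneg hR) hR (hZ.kernel hA x) hZ
  have e : (fun P : Ptn 0 1 => youngRS A Z x P) = ySum (fun η => A (x - Z η)) Z := by
    funext P
    simp only [youngRS, ySum]
  rw [e]
  exact h

lemma isYoungVelocity_yInt (hA : ABd A L) (hγ : 1 / 2 < γ) (u : HC γ) :
    IsYoungVelocity A (HC.ev u) (fun x => yInt (fun η => A (x - HC.ev u η)) (HC.ev u)) :=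
  (HC.hb_ev u).isYoungVelocity hA hγ (norm_nonneg u)

/-- The right-hand side of the filament equation is determined by the curve. -/
lemma velocity_eq (hA : ABd A L) (hγ : 1 / 2 < γ) {u : HC γ} {Z : ℝ → E3} {V : E3 → E3}
    (hZ : ∀ s ∈ Icc (0:ℝ) 1, HC.ev u s = Z s) (hV : IsYoungVelocity A Z V) {ξ : ℝ}
    (hξ : ξ ∈ Icc (0:ℝ) 1) : V (Z ξ) = HC.ev (field hA hγ u) ξ := by
  rw [ev_field hA hγ u ξ hξ, ← hZ ξ hξ]
  refine RSLimit.unique (S := fun P => youngRS A Z (HC.ev u ξ) P) (hV _) ?_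
  have h := isYoungVelocity_yInt hA hγ u (HC.ev u ξ)
  have e : (fun P : Ptn 0 1 => youngRS A (HC.ev u) (HC.ev u ξ) P)
      = fun P => youngRS A Z (HC.ev u ξ) P := funext fun P => youngRS_congr hZ _ P
  rw [e] at h
  exact h

/-- Pointwise right derivative of an integral curve. -/
lemma ev_deriv (hA : ABd A L) (hγ : 1 / 2 < γ) {a b : ℝ} {U : ℝ → HC γ}
    (hU : Sol (field hA hγ) a b U) {ξ : ℝ} (hξ : ξ ∈ Icc (0:ℝ) 1) {t : ℝ} (ht : t ∈ Ico a b) :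
    HasDerivWithinAt (fun t => HC.ev (U t) ξ) (FF A (HC.ev (U t)) ξ) (Ici t) t := by
  rw [← ev_field hA hγ (U t) ξ hξ]
  exact (HC.evL γ ξ).hasFDerivAt.comp_hasDerivWithinAt t (hU.deriv t ht)

lemma ev_continuousOn {s : Set ℝ} {U : ℝ → HC γ} (hU : ContinuousOn U s) (ξ : ℝ) :
    ContinuousOn (fun t => HC.ev (U t) ξ) s :=
  (HC.evL γ ξ).continuous.comp_continuousOn hU

/-- A continuous curve in `HC γ` is a continuous curve in `𝒞^γ'` for every `γ' ≤ γ`. -/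
lemma memXT_of_cont {γ' T : ℝ} (hγ' : 0 < γ') (hle : γ' ≤ γ) {U : ℝ → HC γ}
    (hU : ContinuousOn U (Icc 0 T)) : MemXT γ' T (fun t => HC.ev (U t)) := by
  have hb : ∀ u : HC γ, HB γ' ‖u‖ (HC.ev u) := fun u =>
    (HC.hb_ev u).mono_exp (norm_nonneg _) hle
  refine ⟨fun t _ => ⟨⟨(hb _).continuousOn hγ', HC.ev_closed _⟩, _, hb _⟩, fun t ht ε hε => ?_⟩
  obtain ⟨δ, hδ, h⟩ := Metric.continuousOn_iff.1 hU t ht (ε / 2) (by positivity)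
  refine ⟨δ / 2, by positivity, fun s hs hst => ?_⟩
  have h1 := h s hs (by rw [Real.dist_eq]; linarith)
  rw [dist_eq_norm] at h1
  have h2 := sNorm_le (norm_nonneg _) (fun ξ _ => HC.norm_ev_le (U s - U t) ξ)
  have h3 := (hb (U s - U t)).hSemi_le (norm_nonneg _)
  change sNorm (HC.ev (U s - U t)) + hSemi γ' (HC.ev (U s - U t)) ≤ ε
  linarith

lemma isYoungSolution_of_sol (hA : ABd A L) (hγ : 1 / 2 < γ) {T : ℝ} {U : ℝ → HC γ}
    (hU : Sol (field hA hγ) 0 T U) (h0 : ∀ ξ ∈ Icc (0:ℝ) 1, HC.ev (U 0) ξ = X ξ) :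
    IsYoungSolution T A X (fun t => HC.ev (U t)) := by
  refine ⟨fun s x => yInt (fun η => A (x - HC.ev (U s) η)) (HC.ev (U s)),
    fun s _ => isYoungVelocity_yInt hA hγ (U s), fun t ht ξ hξ => ?_⟩
  have hU' := hU.mono le_rfl ht.2
  have hc : ContinuousOn (fun s => FF A (HC.ev (U s)) ξ) (Icc 0 t) :=
    (ev_continuousOn ((controlled_field hA hγ).continuousOn_comp hU'.cont) ξ).congr
      fun s _ => (ev_field hA hγ (U s) ξ hξ).symm
  have h := intervalIntegral.integral_eq_sub_of_hasDeriv_right_of_le ht.1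
    (ev_continuousOn hU'.cont ξ)
    (fun s hs => (ev_deriv hA hγ hU' hξ (Ioo_subset_Ico_self hs)).mono Ioi_subset_Ici_self)
    (hc.intervalIntegrable_of_Icc ht.1)
  change _ = X ξ + ∫ s in (0:ℝ)..t, FF A (HC.ev (U s)) ξ
  rw [h, h0 ξ hξ]
  abel

/-- Every solution of the filament equation in `𝒞^γ` comes from an integral curve. -/
lemma exists_sol (hA : ABd A L) (hγ : 1 / 2 < γ) {T : ℝ} (hT : 0 ≤ T) {Z : ℝ → ℝ → E3}
    (hZ : MemXT γ T Z) (hs : IsYoungSolution T A X Z) :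
    ∃ U : ℝ → HC γ, (∀ t ∈ Icc 0 T, ∀ ξ ∈ Icc (0:ℝ) 1, HC.ev (U t) ξ = Z t ξ) ∧
      (∀ ξ ∈ Icc (0:ℝ) 1, HC.ev (U 0) ξ = X ξ) ∧ Sol (field hA hγ) 0 T U := by
  obtain ⟨v, hv, hYint⟩ := hs
  have hex : ∀ t ∈ Icc 0 T, ∃ u : HC γ, ∀ ξ ∈ Icc (0:ℝ) 1, HC.ev u ξ = Z t ξ :=
    fun t ht => HC.exists_of_memC (by linarith) (hZ.1 t ht)
  choose! U hU using hex
  have hcont : ContinuousOn U (Icc 0 T) := by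
    rw [Metric.continuousOn_iff]
    intro t ht ε hε
    obtain ⟨δ, hδ, h⟩ := hZ.2 t ht (ε / 2) (by positivity)
    refine ⟨δ, hδ, fun s hs hst => ?_⟩
    rw [dist_eq_norm]
    refine ((HC.norm_le_hStar _).trans ?_).trans_lt (half_lt_self hε)
    refine le_trans (le_of_eq ?_) (h s hs hst.le)
    have he : ∀ ξ ∈ Icc (0:ℝ) 1, HC.ev (U s - U t) ξ = Z s ξ - Z t ξ := fun ξ hξ => by
      rw [HC.ev_sub, hU s hs ξ hξ, hU t ht ξ hξ]
    unfold hStar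
    rw [sNorm_congr he, hSemi_congr he]
  have h00 : (0:ℝ) ∈ Icc 0 T := left_mem_Icc.2 hT
  have hU0 : ∀ ξ ∈ Icc (0:ℝ) 1, HC.ev (U 0) ξ = X ξ := fun ξ hξ => by
    rw [hU 0 h00 ξ hξ, hYint 0 h00 ξ hξ]; simp
  refine ⟨U, hU, hU0, hcont, fun t ht => ?_⟩
  have hG := (controlled_field hA hγ).continuousOn_comp hcont
  have hW : ∀ r ∈ Icc 0 T, U r = U 0 + ∫ s in (0:ℝ)..r, field hA hγ (U s) := by
    intro r hr
    refine HC.ext_ev fun ξ hξ => ?_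
    have hI : IntervalIntegrable (fun s => field hA hγ (U s)) volume 0 r :=
      (hG.mono (Icc_subset_Icc_right hr.2)).intervalIntegrable_of_Icc hr.1
    have h1 : HC.ev (U 0 + ∫ s in (0:ℝ)..r, field hA hγ (U s)) ξ
        = HC.ev (U 0) ξ + ∫ s in (0:ℝ)..r, HC.ev (field hA hγ (U s)) ξ := by
      have := (HC.evL γ ξ).intervalIntegral_comp_comm hI
      simp only [HC.evL_apply] at this
      rw [this]
      exact (HC.evL γ ξ).map_add _ _
    rw [h1, hU0 ξ hξ, hU r hr ξ hξ, hYint r hr ξ hξ]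
    congr 1
    refine intervalIntegral.integral_congr fun s hs => ?_
    rw [uIcc_of_le hr.1] at hs
    have hs' : s ∈ Icc 0 T := ⟨hs.1, hs.2.trans hr.2⟩
    exact velocity_eq hA hγ (hU s hs') (hv s hs') hξ
  have ht' : t ∈ Icc 0 T := Ico_subset_Icc_self ht
  have hd := ODE.hasDerivWithinAt_picard_Icc (f := fun s _ => field hA hγ (U s)) (α := U)
    (u := univ) h00 (hG.comp continuousOn_fst (fun z hz => hz.1)) hcont (fun _ _ => mem_univ _)
    (U 0) ht'
  exact (hd.congr_of_mem hW ht').mono_of_mem_nhdsWithin (Icc_mem_nhdsGE_of_mem ht)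

/-- Persistence of regularity: as long as the `γ'`-Hölder seminorm of a solution stays bounded,
its velocity fields are uniformly Lipschitz, and by Grönwall's lemma the flow propagates
`γ`-Hölder regularity. -/
lemma holder_propagation (hA : ABd A L) (hγ : 1 / 2 < γ) {γ' R a b : ℝ} (hγ' : 1 / 2 < γ')
    (hR : 0 ≤ R) (hab : a ≤ b) {U : ℝ → HC γ} (hU : Sol (field hA hγ) a b U)
    (hb : ∀ t ∈ Icc a b, HB γ' R (HC.ev (U t))) :
    hSemi γ (HC.ev (U b)) ≤ HC.semi (U a) * Real.exp (KK γ' * (L * R ^ 2) * (b - a)) := by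
  refine HB.hSemi_le (mul_nonneg (HC.semi_nonneg _) (Real.exp_nonneg _)) fun ξ hξ η hη => ?_
  have h := norm_le_gronwallBound_of_norm_deriv_right_le
    (f := fun t => HC.ev (U t) ξ - HC.ev (U t) η) (δ := HC.semi (U a) * |ξ - η| ^ γ)
    (K := KK γ' * (L * R ^ 2)) (ε := 0)
    ((ev_continuousOn hU.cont ξ).sub (ev_continuousOn hU.cont η))
    (fun t ht => (ev_deriv hA hγ hU hξ ht).sub (ev_deriv hA hγ hU hη ht))
    (HC.hb_semi (U a) ξ hξ η hη)
    (fun t ht => by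
      rw [add_zero]
      exact V_lip hA hγ' hR (hb t (Ico_subset_Icc_self ht)) (HC.ev_closed _) _ _)
    b (right_mem_Icc.2 hab)
  rw [gronwallBound_ε0] at h
  refine h.trans (le_of_eq (by ring))

end

/-- Let `‖∇A‖_2 < ∞` and `X ∈ 𝒞^{γ*}` with `γ* > 1/2`. There is a
(possibly infinite) time `t̂ > 0`, *independent of `γ`*, such that for every
`1/2 < γ ≤ γ*` there is a unique solution `Y^γ ∈ C([0, t̂), 𝒞^γ)` of the vortex filament
equation with initial condition `X`, and `t̂` is the first epoch of irregularity of `Y^γ`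
in `𝒞^γ` (if `t̂ < ∞` then `‖Y^γ(t)‖_γ → ∞` as `t → t̂⁻`). -/
theorem statement_10 (γs : ℝ) (h1 : 1 / 2 < γs) (h2 : γs ≤ 1)
    (A : E3 → M3) (hA : NablaBdd 1 2 A)
    (X : ℝ → E3) (hX : MemC γs X) :
    ∃ That : ℝ≥0∞, 0 < That ∧
      ∀ γ : ℝ, 1 / 2 < γ → γ ≤ γs →
        ∃ Y : ℝ → ℝ → E3,
          (∀ T : ℝ, 0 < T → ENNReal.ofReal T < That →
            MemXT γ T Y ∧ IsYoungSolution T A X Y) ∧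
          (∀ Z : ℝ → ℝ → E3, ∀ T : ℝ, 0 < T → ENNReal.ofReal T < That →
            MemXT γ T Z → IsYoungSolution T A X Z →
            ∀ t ∈ Icc 0 T, ∀ ξ ∈ Icc (0:ℝ) 1, Z t ξ = Y t ξ) ∧
          (That ≠ ⊤ → Tendsto (fun t => hSemi γ (Y t)) (𝓝[<] That.toReal) atTop) := by
  obtain ⟨L, hA⟩ := hA.abd
  obtain ⟨u₀, hu₀⟩ := HC.exists_of_memC (by linarith) hX
  -- the maximal solution in the smallest space `𝒞^γ*` serves every exponent
  obtain ⟨That, U, hpos, hU0, hsol, hblow⟩ := (controlled_field hA h1).exists_maximal u₀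
  have hU0X : ∀ ξ ∈ Icc (0:ℝ) 1, HC.ev (U 0) ξ = X ξ := by rw [hU0]; exact hu₀
  refine ⟨That, hpos, fun γ hγ hle => ⟨fun t => HC.ev (U t), ?_, ?_, ?_⟩⟩
  · exact fun T _ hT => ⟨memXT_of_cont (by linarith) hle (hsol T hT).cont,
      isYoungSolution_of_sol hA h1 (hsol T hT) hU0X⟩
  · intro Z T hT hlt hZ hZs t ht ξ hξ
    obtain ⟨W, hW, hW0, hWs⟩ := exists_sol hA hγ hT.le hZ hZs
    obtain ⟨W', hW', hW0', hWs'⟩ := exists_sol hA hγ hT.le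
      (memXT_of_cont (by linarith) hle (hsol T hlt).cont)
      (isYoungSolution_of_sol hA h1 (hsol T hlt) hU0X)
    have := hWs.unique (controlled_field hA hγ) hWs'
      (HC.ext_ev fun ξ hξ => (hW0 ξ hξ).trans (hW0' ξ hξ).symm) ht
    rw [← hW t ht ξ hξ, this, hW' t ht ξ hξ]
  · intro hfin
    by_contra hnot
    have hTpos : 0 < That.toReal := ENNReal.toReal_pos hpos.ne' hfin
    have hlt : ∀ t < That.toReal, ENNReal.ofReal t < That := fun t ht => by
      rw [← ENNReal.ofReal_toReal hfin]
      exact (ENNReal.ofReal_lt_ofReal_iff hTpos).2 ht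
    rw [tendsto_atTop] at hnot
    push Not at hnot
    obtain ⟨R, hR⟩ := hnot
    obtain ⟨τ, hτ, hloc⟩ := (controlled_field hA hγ).exists_local R
    have hev : ∀ᶠ t in 𝓝[<] That.toReal, t ∈ Ioo (max 0 (That.toReal - τ)) That.toReal :=
      Ioo_mem_nhdsLT (max_lt hTpos (by linarith))
    obtain ⟨t₀, ht₀R, ht₀⟩ := (hR.and_eventually hev).exists
    have ht₀0 : 0 < t₀ := (le_max_left _ _).trans_lt ht₀.1
    have ht₀τ : That.toReal < t₀ + τ := by linarith [(le_max_right _ _).trans_lt ht₀.1]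
    have hR0 : 0 ≤ R + 1 := by linarith [hSemi_nonneg γ (HC.ev (U t₀))]
    -- the local solution in `𝒞^γ` started at `t₀` covers the rest of the life time
    have hbd : ∀ t, t₀ ≤ t → t < That.toReal → HB γ (R + 1) (HC.ev (U t)) := by
      intro t h0t htT
      have ht0 : 0 ≤ t := ht₀0.le.trans h0t
      have hs := hsol t (hlt t htT)
      obtain ⟨W, hW, hW0, hWs⟩ := exists_sol hA hγ ht0
        (memXT_of_cont (by linarith) hle hs.cont) (isYoungSolution_of_sol hA h1 hs hU0X)
      have hp : HC.semi (W t₀) ≤ R := by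
        unfold HC.semi
        rw [hSemi_congr (hW t₀ ⟨ht₀0.le, h0t⟩)]
        exact ht₀R.le
      obtain ⟨α, hα0, hα, hαb⟩ := hloc (W t₀) t₀ hp
      have he := (hWs.mono ht₀0.le le_rfl).unique (controlled_field hA hγ)
        (hα.mono le_rfl (by linarith)) hα0.symm (right_mem_Icc.2 h0t)
      have hb := hαb t ⟨h0t, by linarith⟩
      rw [← he] at hb
      exact ((HC.hb_semi (W t)).mono_const hb).congr (hW t (right_mem_Icc.2 ht0))
    set K := KK γ * (L * (R + 1) ^ 2)
    have hK : 0 ≤ K := mul_nonneg (KK_pos hγ).le (mul_nonneg hA.nonneg (by positivity))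
    have hC : ∀ t, t₀ ≤ t → t < That.toReal →
        HC.semi (U t) ≤ HC.semi (U t₀) * Real.exp (K * τ) := by
      intro t h0t htT
      refine (holder_propagation hA h1 hγ hR0 h0t
        ((hsol t (hlt t htT)).mono ht₀0.le le_rfl)
        (fun s hs => hbd s hs.1 (hs.2.trans_lt htT))).trans ?_
      refine mul_le_mul_of_nonneg_left (Real.exp_le_exp.2 ?_) (HC.semi_nonneg _)
      exact mul_le_mul_of_nonneg_left (by linarith) hK
    have hev2 : ∀ᶠ t in 𝓝[<] That.toReal, t ∈ Ioo t₀ That.toReal := Ioo_mem_nhdsLT ht₀.2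
    obtain ⟨t, hta, htb⟩ := ((tendsto_atTop.1 (hblow hfin)
      (HC.semi (U t₀) * Real.exp (K * τ) + 1)).and hev2).exists
    linarith [hC t htb.1.le htb.2]

end
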